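/- Let d ≥ 2, let Σ ⊂ GL_d(ℝ) be a compact subset, and let μ₀, μ₁ be Borel probability measures supported in Σ. Assume μ₀ is quasi-irreducible and L_1(μ₀) > L_2(μ₀). Then the map t ↦ L_1((1−t)μ₀ + tμ₁) is given by a convergent power series near 0: there exist ε > 0 and real coefficients (a_k)_{k≥0} with Σ_k |a_k| ε^k < ∞ such that L_1((1−t)μ₀ + tμ₁) = Σ_{k≥0} a_k t^k for all t ∈ [0, ε). -/

import Mathlib

open MeasureTheory Filter
open scoped LinearAlgebra.Projectivization

noncomputable section

abbrev GLd (d : ℕ) := GL (Fin d) ℝ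
abbrev Ed (d : ℕ) := EuclideanSpace ℝ (Fin d)
abbrev Pd (d : ℕ) := ℙ ℝ (Ed d)

variable {d : ℕ}

instance : MeasurableSpace (GLd d) := borel _
instance : BorelSpace (GLd d) := ⟨rfl⟩

instance : TopologicalSpace (Pd d) :=
  (instTopologicalSpaceQuotient : TopologicalSpace (Quotient (projectivizationSetoid ℝ (Ed d))))
instance : MeasurableSpace (Pd d) := borel _
instance : BorelSpace (Pd d) := ⟨rfl⟩

/-- The continuous linear map on Euclidean space induced by `g ∈ GL_d(ℝ)`. -/
def glCLM (g : GLd d) : Ed d →L[ℝ] Ed d :=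
  Matrix.toEuclideanCLM (𝕜 := ℝ) (g : Matrix (Fin d) (Fin d) ℝ)

/-- The operator norm of `g ∈ GL_d(ℝ)`. -/
def gnorm (g : GLd d) : ℝ := ‖glCLM g‖

lemma glCLM_leftInv (g : GLd d) (v : Ed d) : glCLM g⁻¹ (glCLM g v) = v := by
  have h : glCLM (d := d) g⁻¹ * glCLM g = 1 := by
    rw [glCLM, glCLM, ← map_mul]
    norm_cast
    rw [inv_mul_cancel g]
    exact map_one _
  calc glCLM g⁻¹ (glCLM g v) = (glCLM g⁻¹ * glCLM g) v := rfl
    _ = v := by rw [h]; rfl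

lemma glLinear_injective (g : GLd d) : Function.Injective (glCLM g).toLinearMap :=
  Function.LeftInverse.injective (g := (glCLM g⁻¹)) (fun v => glCLM_leftInv g v)

/-- The projective action of `g ∈ GL_d(ℝ)` on `ℙ(ℝ^d)`. -/
def pact (g : GLd d) : Pd d → Pd d :=
  Projectivization.map (glCLM g).toLinearMap (glLinear_injective g)

/-- The projective distance `δ` on `ℙ(ℝ^d)`, computed on representatives. -/
def pdelta (x y : Pd d) : ℝ :=
  Real.sqrt (‖x.rep‖ ^ 2 * ‖y.rep‖ ^ 2 - (inner ℝ x.rep y.rep : ℝ) ^ 2) /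
    (‖x.rep‖ * ‖y.rep‖)

/-- Convolution of two measures on `GL_d(ℝ)`. -/
def mconv (μ ν : Measure (GLd d)) : Measure (GLd d) :=
  (μ.prod ν).map (fun p => p.1 * p.2)

/-- `n`-fold convolution power of a measure on `GL_d(ℝ)`. -/
def mconvN (μ : Measure (GLd d)) : ℕ → Measure (GLd d)
  | 0 => Measure.dirac 1
  | n + 1 => if n = 0 then μ else mconv (mconvN μ n) μ

/-- The top Lyapunov exponent of a (compactly supported) measure on `GL_d(ℝ)`. -/
def L1 (μ : Measure (GLd d)) : ℝ :=
  limUnder atTop (fun n : ℕ => (n : ℝ)⁻¹ * ∫ g, Real.log (gnorm g) ∂(mconvN μ n))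

/-- `N₂ g = s₁(g)s₂(g)`, the product of the two largest singular values. -/
def N2 (g : GLd d) : ℝ :=
  sSup { x | ∃ p q : Ed d, ‖p‖ = 1 ∧ ‖q‖ = 1 ∧ (inner ℝ p q : ℝ) = 0 ∧
    x = Real.sqrt (‖glCLM g p‖ ^ 2 * ‖glCLM g q‖ ^ 2 -
      (inner ℝ (glCLM g p) (glCLM g q) : ℝ) ^ 2) }

/-- `L₁(μ) + L₂(μ)`. -/
def L12 (μ : Measure (GLd d)) : ℝ :=
  limUnder atTop (fun n : ℕ => (n : ℝ)⁻¹ * ∫ g, Real.log (N2 g) ∂(mconvN μ n))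

/-- The second Lyapunov exponent. -/
def L2 (μ : Measure (GLd d)) : ℝ := L12 μ - L1 μ

/-- The top Lyapunov exponent of the restriction of `μ` to an (invariant) subspace `V`. -/
def L1rest (μ : Measure (GLd d)) (V : Submodule ℝ (Ed d)) : ℝ :=
  limUnder atTop (fun n : ℕ => (n : ℝ)⁻¹ *
    ∫ g, Real.log ‖LinearMap.toContinuousLinearMap ((glCLM g).toLinearMap.domRestrict V)‖
      ∂(mconvN μ n))

/-- Quasi-irreducibility of a measure on `GL_d(ℝ)`. -/
def QuasiIrreducible (μ : Measure (GLd d)) : Prop :=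
  ¬ ∃ V : Submodule ℝ (Ed d), V ≠ ⊥ ∧ V ≠ ⊤ ∧
    (∀ᵐ g ∂μ, V.map (glCLM g).toLinearMap = V) ∧ L1rest μ V < L1 μ

/-- Irreducibility of a measure on `GL_d(ℝ)`. -/
def Irred (μ : Measure (GLd d)) : Prop :=
  ¬ ∃ V : Submodule ℝ (Ed d), V ≠ ⊥ ∧ V ≠ ⊤ ∧
    (∀ᵐ g ∂μ, V.map (glCLM g).toLinearMap = V)

/-- The Markov operator associated with a measure on `GL_d(ℝ)`. -/
def Qop (μ : Measure (GLd d)) (φ : Pd d → ℝ) : Pd d → ℝ :=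
  fun v => ∫ g, φ (pact g v) ∂μ

/-- The average `α`-Hölder constant of a measure on `GL_d(ℝ)`. -/
def kalpha (α : ℝ) (μ : Measure (GLd d)) : ℝ :=
  sSup { x | ∃ v₁ v₂ : Pd d, v₁ ≠ v₂ ∧
    x = ∫ g, (pdelta (pact g v₁) (pact g v₂) / pdelta v₁ v₂) ^ α ∂μ }

/-- The `α`-Hölder seminorm of an observable on `ℙ(ℝ^d)`. -/
def valpha (α : ℝ) (φ : Pd d → ℝ) : ℝ :=
  sSup { x | ∃ v₁ v₂ : Pd d, v₁ ≠ v₂ ∧ x = |φ v₁ - φ v₂| / pdelta v₁ v₂ ^ α }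

/-- `φ` is `α`-Hölder: `v_α(φ) < ∞`. -/
def IsHolder (α : ℝ) (φ : Pd d → ℝ) : Prop :=
  BddAbove { x | ∃ v₁ v₂ : Pd d, v₁ ≠ v₂ ∧ x = |φ v₁ - φ v₂| / pdelta v₁ v₂ ^ α }

/-- The total variation distance between two finite measures. -/
def tvDist (μ ν : Measure (GLd d)) [IsFiniteMeasure μ] [IsFiniteMeasure ν] : ℝ :=
  ((μ.toSignedMeasure - ν.toSignedMeasure).totalVariation Set.univ).toReal

/-- A measure is compactly supported. -/
def CompactlySupported (μ : Measure (GLd d)) : Prop :=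
  ∃ K : Set (GLd d), IsCompact K ∧ μ Kᶜ = 0

/-- `S` is the (topological) support of `μ`. -/
def IsSupport (μ : Measure (GLd d)) (S : Set (GLd d)) : Prop :=
  μ Sᶜ = 0 ∧ ∀ x ∈ S, ∀ U : Set (GLd d), IsOpen U → x ∈ U → 0 < μ U

/-- A measure `η` on `ℙ(ℝ^d)` is `μ`-stationary. -/
def Stationary (μ : Measure (GLd d)) (η : Measure (Pd d)) : Prop :=
  ∀ φ : Pd d → ℝ, Continuous φ → (∃ C, ∀ v, |φ v| ≤ C) →
    ∫ v, φ v ∂η = ∫ g, ∫ v, φ (pact g v) ∂η ∂μ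

/-!
Write `c(g, v) = log ‖g v‖` for unit vectors `v`.

*Uniform growth.* Let `β = lim (1/n) min_v ∫ c(g, v) dμ₀^{*n}(g)`. A limit `η` of the empirical
measures of walks started at minimizing directions is stationary with mean growth `β`. Since `nβ` is
asymptotically also the minimum, `(c(g, v) - nβ) / n → 0` in `L²(μ₀^{*n})` along a subsequence for
`η`-almost every `v`, so the growth rate of `μ₀` on the span of these `v` is at most `β`. That span
is invariant, and quasi-irreducibility gives `L1 μ₀ ≤ β`.

*Contraction.* The sine of the angle between `g v` and `g w` is at most `s₁ s₂(g) / (‖g v‖ ‖g w‖)`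
times the one between `v` and `w`. As `L1 μ₀ + L2 μ₀ < 2 L1 μ₀ ≤ 2β`, for some `m` and all small
`α > 0` the `α`-th power of the sine contracts on average under `μ₀^{*m}`: the `m`-th power of the
transfer operator on `α`-Hölder functions modulo constants has norm less than `1`.

*Analyticity.* Functions modulo constants are represented by those vanishing at a base point `v₀`.
The operators `(1 - t) T₀ + t T₁` still have geometrically decaying powers for complex `t` near `0`,
and `L1` of the mixture is its mean growth at `v₀` plus the sum, along the orbit of the growth
function, of the mean increments at `v₀`: a locally uniformly convergent series of holomorphic
functions of `t`.
-/

open scoped Topology Pointwise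

/-! ### The linear action and the norm cocycle on the unit sphere -/

instance : SecondCountableTopology (GLd d) := by
  have : SecondCountableTopology (Matrix (Fin d) (Fin d) ℝ) :=
    inferInstanceAs (SecondCountableTopology (Fin d → Fin d → ℝ))
  have : SecondCountableTopology (Matrix (Fin d) (Fin d) ℝ)ᵐᵒᵖ :=
    MulOpposite.opHomeomorph.symm.isEmbedding.secondCountableTopology
  exact Units.isEmbedding_embedProduct.secondCountableTopology

@[fun_prop]
lemma continuous_glCLM : Continuous (glCLM (d := d)) :=
  ((Matrix.toEuclideanCLM (n := Fin d) (𝕜 := ℝ)).toAlgEquiv.toLinearMap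
    |>.continuous_of_finiteDimensional).comp Units.continuous_val

lemma glCLM_one : glCLM (1 : GLd d) = 1 := by simp [glCLM]

lemma glCLM_mul_apply (g h : GLd d) (v : Ed d) : glCLM (g * h) v = glCLM g (glCLM h v) := by
  have : glCLM (g * h) = glCLM g * glCLM h := by simp [glCLM]
  rw [this, mul_apply_eq_comp]

lemma glCLM_ne_zero (g : GLd d) {v : Ed d} (hv : v ≠ 0) : glCLM g v ≠ 0 :=
  (map_ne_zero_iff _ (glLinear_injective g)).2 hv

lemma map_glCLM_top (g : GLd d) : (⊤ : Submodule ℝ (Ed d)).map (glCLM g).toLinearMap = ⊤ := by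
  rw [Submodule.map_top, LinearMap.range_eq_top]
  exact LinearMap.injective_iff_surjective.1 (glLinear_injective g)

/-- The unit sphere of `ℝ^d`, on which `GL_d(ℝ)` acts by `v ↦ g v / ‖g v‖`. It replaces the
projective space of directions. -/
abbrev UnitSphere (d : ℕ) : Type := Metric.sphere (0 : Ed d) 1

namespace UnitSphere

lemma coe_ne_zero (v : UnitSphere d) : (v : Ed d) ≠ 0 := ne_zero_of_mem_unit_sphere v

lemma norm_glCLM_pos (g : GLd d) (v : UnitSphere d) : 0 < ‖glCLM g v‖ :=
  norm_pos_iff.2 (glCLM_ne_zero g v.coe_ne_zero)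

instance : SMul (GLd d) (UnitSphere d) where
  smul g v := ⟨‖glCLM g v‖⁻¹ • glCLM g v, by simp [norm_smul, (norm_glCLM_pos g v).ne']⟩

lemma coe_smul (g : GLd d) (v : UnitSphere d) :
    ((g • v : UnitSphere d) : Ed d) = ‖glCLM g v‖⁻¹ • glCLM g v := rfl

lemma glCLM_eq_smul (g : GLd d) (v : UnitSphere d) :
    glCLM g v = ‖glCLM g v‖ • ((g • v : UnitSphere d) : Ed d) := by
  rw [coe_smul, smul_inv_smul₀ (norm_glCLM_pos g v).ne']

instance : MulAction (GLd d) (UnitSphere d) where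
  one_smul v := Subtype.ext <| by simp [coe_smul, glCLM_one]
  mul_smul g h v := Subtype.ext <| by
    have := (norm_glCLM_pos h v).ne'
    simp only [coe_smul, glCLM_mul_apply, map_smul, norm_smul, norm_inv, norm_norm, smul_smul]
    congr 1
    field_simp

instance : ContinuousSMul (GLd d) (UnitSphere d) where
  continuous_smul := by
    have h : Continuous fun p : GLd d × UnitSphere d => glCLM p.1 (p.2 : Ed d) := by fun_prop
    exact ((h.norm.inv₀ fun p => (norm_glCLM_pos p.1 p.2).ne').smul h).subtype_mk _

instance [NeZero d] : Nonempty (UnitSphere d) :=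
  (NormedSpace.sphere_nonempty.2 zero_le_one).to_subtype

lemma exists_coe_mem {V : Submodule ℝ (Ed d)} (hV : V ≠ ⊥) :
    ∃ v : UnitSphere d, (v : Ed d) ∈ V := by
  obtain ⟨x, hx, hx0⟩ := V.exists_mem_ne_zero_of_ne_bot hV
  exact ⟨⟨‖x‖⁻¹ • x, by simp [norm_smul, hx0]⟩, V.smul_mem _ hx⟩

lemma span_range_coe : Submodule.span ℝ (Set.range ((↑) : UnitSphere d → Ed d)) = ⊤ := by
  refine eq_top_iff.2 fun x _ => ?_
  rcases eq_or_ne x 0 with rfl | hx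
  · exact zero_mem _
  · rw [← smul_inv_smul₀ (norm_ne_zero_iff.2 hx) x]
    exact Submodule.smul_mem _ _ <| Submodule.subset_span
      ⟨⟨‖x‖⁻¹ • x, by simp [norm_smul, hx]⟩, rfl⟩

end UnitSphere

open UnitSphere

/-- The cocycle `(g, v) ↦ log ‖g v‖` over the action of `GL_d(ℝ)` on the unit sphere. -/
def normCocycle (g : GLd d) (v : UnitSphere d) : ℝ := Real.log ‖glCLM g v‖

lemma normCocycle_one (v : UnitSphere d) : normCocycle 1 v = 0 := by
  simp [normCocycle, glCLM_one]

lemma normCocycle_mul (g h : GLd d) (v : UnitSphere d) :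
    normCocycle (g * h) v = normCocycle h v + normCocycle g (h • v) := by
  rw [normCocycle, glCLM_mul_apply, glCLM_eq_smul h v, map_smul, norm_smul, norm_norm,
    Real.log_mul (norm_glCLM_pos h v).ne' (norm_glCLM_pos g _).ne', normCocycle, normCocycle]

@[fun_prop]
lemma continuous_normCocycle {X : Type*} [TopologicalSpace X] {g : X → GLd d}
    {v : X → UnitSphere d} (hg : Continuous g) (hv : Continuous v) :
    Continuous fun x => normCocycle (g x) (v x) := by
  have h : Continuous fun x => glCLM (g x) (v x : Ed d) := by fun_prop
  exact h.norm.log fun x => (norm_glCLM_pos (g x) (v x)).ne'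

/-! ### Compactly supported probability measures and their convolution powers -/

/-- Compactly supported probability measures on `GL_d(ℝ)`, as a class so that it passes to
convolution powers by instance resolution. -/
class IsCompactProbability (μ : Measure (GLd d)) : Prop extends IsProbabilityMeasure μ where
  compactlySupported : CompactlySupported μ

section CompactlySupported

variable {E : Type*} [NormedAddCommGroup E] {f : GLd d → E} {μ ν : Measure (GLd d)}

lemma integrable_of_measure_compl_eq_zero {X : Type*} [TopologicalSpace X] [T2Space X]
    [MeasurableSpace X] [OpensMeasurableSpace X] {μ : Measure X} [IsFiniteMeasure μ] {K : Set X}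
    (hK : IsCompact K) (hμ : μ Kᶜ = 0) {f : X → E} (hf : Continuous f) : Integrable f μ := by
  have := hf.continuousOn.integrableOn_compact (μ := μ) hK
  rwa [IntegrableOn, Measure.restrict_eq_self_of_ae_mem (by exact hμ)] at this

lemma integrable_of_continuous (μ : Measure (GLd d)) [IsCompactProbability μ] (hf : Continuous f) :
    Integrable f μ := by
  obtain ⟨K, hK, hμ⟩ := IsCompactProbability.compactlySupported (μ := μ)
  exact integrable_of_measure_compl_eq_zero hK hμ hf

lemma continuous_integral_of_isCompactProbability {X : Type*} [TopologicalSpace X]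
    [FirstCountableTopology X] [LocallyCompactSpace X] [NormedSpace ℝ E] [IsCompactProbability μ]
    {f : X → GLd d → E} (hf : Continuous f.uncurry) : Continuous fun x => ∫ g, f x g ∂μ := by
  obtain ⟨K, hK, hμ⟩ := IsCompactProbability.compactlySupported (μ := μ)
  have := continuous_parametric_integral_of_continuous (μ := μ) hf hK
  rwa [Measure.restrict_eq_self_of_ae_mem (by exact hμ)] at this

instance : IsCompactProbability (Measure.dirac (1 : GLd d)) where
  compactlySupported := ⟨{1}, isCompact_singleton, by simp⟩

instance [IsCompactProbability μ] [IsCompactProbability ν] : IsCompactProbability (mconv μ ν) where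
  toIsProbabilityMeasure := Measure.isProbabilityMeasure_map measurable_mul.aemeasurable
  compactlySupported := by
    obtain ⟨K, hK, hμ⟩ := IsCompactProbability.compactlySupported (μ := μ)
    obtain ⟨L, hL, hν⟩ := IsCompactProbability.compactlySupported (μ := ν)
    have hKL : IsCompact (K * L) := hK.mul hL
    refine ⟨_, hKL, ?_⟩
    rw [mconv, Measure.map_apply measurable_mul hKL.measurableSet.compl]
    refine measure_mono_null (t := (K ×ˢ L)ᶜ) ?_ ?_
    · rintro p hp hq
      exact hp (Set.mul_mem_mul hq.1 hq.2)
    · rw [Set.compl_prod_eq_union]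
      exact measure_union_null (by simp [Measure.prod_prod, hμ]) (by simp [Measure.prod_prod, hν])

instance [IsCompactProbability μ] (n : ℕ) : IsCompactProbability (mconvN μ n) := by
  induction n with
  | zero => exact inferInstanceAs (IsCompactProbability (Measure.dirac 1))
  | succ n ih =>
    rw [mconvN]
    split_ifs <;> infer_instance

lemma mconvN_zero (μ : Measure (GLd d)) : mconvN μ 0 = Measure.dirac 1 := by rw [mconvN]

lemma mconvN_one (μ : Measure (GLd d)) : mconvN μ 1 = μ := by simp [mconvN]

lemma mconvN_succ (μ : Measure (GLd d)) [SFinite μ] (n : ℕ) :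
    mconvN μ (n + 1) = mconv (mconvN μ n) μ := by
  rcases eq_or_ne n 0 with rfl | hn
  · rw [mconvN_one, mconvN_zero]
    exact (Measure.dirac_one_mconv μ).symm
  · rw [mconvN, if_neg hn]

lemma mconvN_add (μ : Measure (GLd d)) [IsCompactProbability μ] (n m : ℕ) :
    mconvN μ (n + m) = mconv (mconvN μ n) (mconvN μ m) := by
  induction m with
  | zero =>
    rw [mconvN_zero]
    exact (Measure.mconv_dirac_one _).symm
  | succ m ih =>
    rw [← add_assoc, mconvN_succ, ih, mconvN_succ]
    exact Measure.mconv_assoc _ _ _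

lemma ae_mconvN [IsCompactProbability μ] {P : GLd d → Prop} (hP : MeasurableSet {g | P g})
    (hone : P 1) (hmul : ∀ g h, P g → P h → P (g * h)) (hμ : ∀ᵐ g ∂μ, P g) (n : ℕ) :
    ∀ᵐ g ∂mconvN μ n, P g := by
  induction n with
  | zero => rwa [mconvN_zero, ae_dirac_iff hP]
  | succ n ih =>
    rw [mconvN_succ, mconv, ae_map_iff measurable_mul.aemeasurable hP]
    filter_upwards [Measure.quasiMeasurePreserving_fst.ae ih,
      Measure.quasiMeasurePreserving_snd.ae hμ] with p h₁ h₂ using hmul _ _ h₁ h₂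

variable [NormedSpace ℝ E]

lemma integrable_integral_mul [IsCompactProbability μ] [IsCompactProbability ν]
    (hf : Continuous f) : Integrable (fun h => ∫ g, f (g * h) ∂μ) ν := by
  have : Integrable f (Measure.mconv μ ν) := integrable_of_continuous (mconv μ ν) hf
  exact (this.comp_measurable measurable_mul).integral_prod_right

lemma integral_mconv_eq [IsCompactProbability μ] [IsCompactProbability ν] (hf : Continuous f) :
    ∫ g, f g ∂mconv μ ν = ∫ h, ∫ g, f (g * h) ∂μ ∂ν := by
  have : Integrable f (Measure.mconv μ ν) := integrable_of_continuous (mconv μ ν) hf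
  exact (integral_mconv this).trans (integral_integral_swap (this.comp_measurable measurable_mul))

end CompactlySupported

lemma exists_tendsto_inv_mul_integral_of_subadditive (μ : Measure (GLd d))
    [IsCompactProbability μ] {G : GLd d → ℝ} (hG : Continuous G)
    (hsub : ∀ n, ∀ᵐ h ∂mconvN μ n, ∀ g, G (g * h) ≤ G g + G h) {K : ℝ}
    (hlow : ∀ n : ℕ, -(K * n) ≤ ∫ g, G g ∂mconvN μ n) :
    ∃ l, Tendsto (fun n : ℕ => (n : ℝ)⁻¹ * ∫ g, G g ∂mconvN μ n) atTop (𝓝 l) := by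
  have hs : Subadditive fun n : ℕ => ∫ g, G g ∂mconvN μ n := by
    intro m n
    have hint (k : ℕ) : Integrable G (mconvN μ k) := integrable_of_continuous _ hG
    calc ∫ g, G g ∂mconvN μ (m + n)
        = ∫ h, ∫ g, G (g * h) ∂mconvN μ m ∂mconvN μ n := by rw [mconvN_add, integral_mconv_eq hG]
      _ ≤ ∫ h, ((∫ g, G g ∂mconvN μ m) + G h) ∂mconvN μ n := by
          refine integral_mono_ae (integrable_integral_mul hG)
            ((integrable_const _).add (hint n)) ?_
          filter_upwards [hsub n] with h hh
          calc ∫ g, G (g * h) ∂mconvN μ m ≤ ∫ g, (G g + G h) ∂mconvN μ m :=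
                integral_mono (integrable_of_continuous _ (by fun_prop))
                  ((hint m).add (integrable_const _)) hh
            _ = (∫ g, G g ∂mconvN μ m) + G h := by
                rw [integral_add (hint m) (integrable_const _), integral_const]
                simp
      _ = (∫ g, G g ∂mconvN μ m) + ∫ g, G g ∂mconvN μ n := by
          rw [integral_add (integrable_const _) (hint n), integral_const]
          simp
  have hbdd : BddBelow (Set.range fun n : ℕ => (∫ g, G g ∂mconvN μ n) / n) := by
    refine ⟨-|K|, ?_⟩
    rintro _ ⟨n, rfl⟩
    rcases n.eq_zero_or_pos with rfl | hn
    · simp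
    · rw [le_div_iff₀ (by positivity)]
      nlinarith [hlow n, le_abs_self K, (Nat.cast_pos (α := ℝ)).2 hn]
  exact ⟨hs.lim, (hs.tendsto_lim hbdd).congr fun n => div_eq_inv_mul _ _⟩

lemma exists_ae_abs_normCocycle_le (μ : Measure (GLd d)) [IsCompactProbability μ] :
    ∃ K : ℝ, 0 ≤ K ∧ ∀ᵐ g ∂μ, ∀ v, |normCocycle g v| ≤ K := by
  obtain ⟨S, hS, hμ⟩ := IsCompactProbability.compactlySupported (μ := μ)
  obtain ⟨K, hK⟩ := (hS.prod (isCompact_univ (X := UnitSphere d))).exists_bound_of_continuousOn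
    (f := fun p : GLd d × UnitSphere d => normCocycle p.1 p.2) (by fun_prop)
  have hmem : ∀ᵐ g ∂μ, g ∈ S := hμ
  refine ⟨|K|, abs_nonneg K, ?_⟩
  filter_upwards [hmem] with g hg v using (hK (g, v) ⟨hg, trivial⟩).trans (le_abs_self K)

/-- The mean `∫ log ‖g v‖ dμ^{*n}(g)` of the norm cocycle after `n` steps. -/
def meanCocycle (μ : Measure (GLd d)) (n : ℕ) (v : UnitSphere d) : ℝ :=
  ∫ g, normCocycle g v ∂mconvN μ n

lemma meanCocycle_zero (μ : Measure (GLd d)) (v : UnitSphere d) : meanCocycle μ 0 v = 0 := by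
  rw [meanCocycle, mconvN_zero, integral_dirac, normCocycle_one]

lemma meanCocycle_one (μ : Measure (GLd d)) (v : UnitSphere d) :
    meanCocycle μ 1 v = ∫ g, normCocycle g v ∂μ := by
  rw [meanCocycle, mconvN_one]

section MeanCocycle

variable {μ : Measure (GLd d)} [IsCompactProbability μ]

@[fun_prop]
lemma continuous_meanCocycle (n : ℕ) : Continuous (meanCocycle μ n) :=
  continuous_integral_of_isCompactProbability (by simp only [Function.uncurry_def]; fun_prop)

lemma meanCocycle_add (n m : ℕ) (v : UnitSphere d) :
    meanCocycle μ (n + m) v = ∫ h, (normCocycle h v + meanCocycle μ n (h • v)) ∂mconvN μ m := by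
  rw [meanCocycle, mconvN_add, integral_mconv_eq (by fun_prop)]
  congr with h
  simp_rw [normCocycle_mul]
  rw [integral_add (integrable_const _) (integrable_of_continuous _ (by fun_prop)), integral_const]
  simp [meanCocycle]

lemma meanCocycle_succ (n : ℕ) (v : UnitSphere d) :
    meanCocycle μ (n + 1) v = ∫ h, (normCocycle h v + meanCocycle μ n (h • v)) ∂μ := by
  rw [meanCocycle_add, mconvN_one]

lemma abs_meanCocycle_le {K : ℝ} (hK : ∀ᵐ g ∂μ, ∀ v : UnitSphere d, |normCocycle g v| ≤ K)
    (n : ℕ) (v : UnitSphere d) : |meanCocycle μ n v| ≤ K * n := by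
  induction n generalizing v with
  | zero => simp [meanCocycle_zero]
  | succ n ih =>
    rw [meanCocycle_succ]
    have := norm_integral_le_of_norm_le_const (μ := μ) (C := K * (n + 1 : ℕ))
      (f := fun h => normCocycle h v + meanCocycle μ n (h • v)) <| by
        filter_upwards [hK] with h hh
        push_cast
        exact (abs_add_le _ _).trans (by linarith [hh v, ih (h • v)])
    simpa using this

end MeanCocycle

/-! ### The growth rate on an invariant subspace -/

/-- The operator norm of the restriction of `g` to the subspace `V`. -/
def restrNorm (V : Submodule ℝ (Ed d)) (g : GLd d) : ℝ := ‖(glCLM g).comp V.subtypeL‖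

section RestrNorm

variable {V : Submodule ℝ (Ed d)}

lemma norm_glCLM_le_restrNorm (g : GLd d) {x : Ed d} (hx : x ∈ V) :
    ‖glCLM g x‖ ≤ restrNorm V g * ‖x‖ :=
  ((glCLM g).comp V.subtypeL).le_opNorm ⟨x, hx⟩

lemma restrNorm_nonneg (g : GLd d) : 0 ≤ restrNorm V g :=
  ContinuousLinearMap.opNorm_nonneg _

lemma restrNorm_pos (hV : V ≠ ⊥) (g : GLd d) : 0 < restrNorm V g := by
  obtain ⟨v, hv⟩ := exists_coe_mem hV
  simpa using (norm_glCLM_pos g v).trans_le (norm_glCLM_le_restrNorm g hv)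

lemma restrNorm_top (g : GLd d) : restrNorm ⊤ g = gnorm g :=
  le_antisymm
    (ContinuousLinearMap.opNorm_le_bound _ (norm_nonneg _) fun x => (glCLM g).le_opNorm x)
    (ContinuousLinearMap.opNorm_le_bound _ (restrNorm_nonneg g) fun _ =>
      norm_glCLM_le_restrNorm g trivial)

lemma restrNorm_mul_le (g : GLd d) {h : GLd d} (hh : ∀ x ∈ V, glCLM h x ∈ V) :
    restrNorm V (g * h) ≤ restrNorm V g * restrNorm V h := by
  refine ContinuousLinearMap.opNorm_le_bound _
    (mul_nonneg (restrNorm_nonneg g) (restrNorm_nonneg h)) fun x => ?_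
  calc ‖glCLM (g * h) x‖ = ‖glCLM g (glCLM h x)‖ := by rw [glCLM_mul_apply]
    _ ≤ restrNorm V g * ‖glCLM h x‖ := norm_glCLM_le_restrNorm g (hh _ x.2)
    _ ≤ restrNorm V g * (restrNorm V h * ‖x‖) :=
      mul_le_mul_of_nonneg_left (norm_glCLM_le_restrNorm h x.2) (restrNorm_nonneg g)
    _ = restrNorm V g * restrNorm V h * ‖x‖ := (mul_assoc _ _ _).symm

lemma continuous_log_restrNorm (hV : V ≠ ⊥) : Continuous fun g => Real.log (restrNorm V g) := by
  have h : Continuous (restrNorm V) := (continuous_glCLM.clm_comp continuous_const).norm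
  exact h.log fun g => (restrNorm_pos hV g).ne'

lemma normCocycle_le_log_restrNorm (g : GLd d) {v : UnitSphere d} (hv : (v : Ed d) ∈ V) :
    normCocycle g v ≤ Real.log (restrNorm V g) :=
  Real.log_le_log (norm_glCLM_pos g v) (by simpa using norm_glCLM_le_restrNorm g hv)

variable {μ : Measure (GLd d)} [IsCompactProbability μ]

lemma meanCocycle_le_integral_log_restrNorm (hV : V ≠ ⊥) {v : UnitSphere d} (hv : (v : Ed d) ∈ V)
    (n : ℕ) : meanCocycle μ n v ≤ ∫ g, Real.log (restrNorm V g) ∂mconvN μ n :=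
  integral_mono (integrable_of_continuous _ (by fun_prop))
    (integrable_of_continuous _ (continuous_log_restrNorm hV))
    fun g => normCocycle_le_log_restrNorm g hv

lemma ae_mconvN_glCLM_mem (hinv : ∀ᵐ g ∂μ, V.map (glCLM g).toLinearMap = V) (n : ℕ) :
    ∀ᵐ g ∂mconvN μ n, ∀ x ∈ V, glCLM g x ∈ V := by
  refine ae_mconvN ?_ (by simp [glCLM_one])
    (fun g h hg hh x hx => by simpa only [glCLM_mul_apply] using hg _ (hh x hx)) ?_ n
  · have : {g : GLd d | ∀ x ∈ V, glCLM g x ∈ V} =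
        ⋂ x ∈ V, (fun g => glCLM g x) ⁻¹' (V : Set (Ed d)) := by
      ext; simp
    rw [this]
    exact (isClosed_biInter fun x _ =>
      V.closed_of_finiteDimensional.preimage (by fun_prop)).measurableSet
  · filter_upwards [hinv] with g hg x hx
    rw [← hg]
    exact Submodule.mem_map_of_mem hx

theorem tendsto_integral_log_restrNorm (hV : V ≠ ⊥)
    (hinv : ∀ᵐ g ∂μ, V.map (glCLM g).toLinearMap = V) :
    Tendsto (fun n : ℕ => (n : ℝ)⁻¹ * ∫ g, Real.log (restrNorm V g) ∂mconvN μ n) atTop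
      (𝓝 (L1rest μ V)) := by
  obtain ⟨K, -, hK⟩ := exists_ae_abs_normCocycle_le μ
  obtain ⟨v, hv⟩ := exists_coe_mem hV
  have hsub (n : ℕ) : ∀ᵐ h ∂mconvN μ n, ∀ g,
      Real.log (restrNorm V (g * h)) ≤ Real.log (restrNorm V g) + Real.log (restrNorm V h) := by
    filter_upwards [ae_mconvN_glCLM_mem hinv n] with h hh g
    rw [← Real.log_mul (restrNorm_pos hV g).ne' (restrNorm_pos hV h).ne']
    exact Real.log_le_log (restrNorm_pos hV _) (restrNorm_mul_le g hh)
  obtain ⟨l, hl⟩ := exists_tendsto_inv_mul_integral_of_subadditive μ (continuous_log_restrNorm hV)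
    hsub fun n => (abs_le.1 (abs_meanCocycle_le hK n v)).1.trans
      (meanCocycle_le_integral_log_restrNorm hV hv n)
  rwa [show L1rest μ V = l from hl.limUnder_eq]

lemma L1rest_top (μ : Measure (GLd d)) : L1rest μ ⊤ = L1 μ := by
  have (g : GLd d) : ‖((glCLM g).toLinearMap.domRestrict ⊤).toContinuousLinearMap‖ = gnorm g :=
    restrNorm_top g
  simp only [L1rest, L1, this]

/-- The vectors `w i` form a basis of the span of `A`. -/
lemma exists_log_restrNorm_le (A : Set (UnitSphere d))
    (hA : Submodule.span ℝ ((↑) '' A : Set (Ed d)) ≠ ⊥) :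
    ∃ (ι : Type) (_ : Fintype ι) (w : ι → UnitSphere d) (C : ℝ), (∀ i, w i ∈ A) ∧ ∀ g c,
      Real.log (restrNorm (Submodule.span ℝ ((↑) '' A)) g) ≤
        C + (c + ∑ i, |normCocycle g (w i) - c|) := by
  obtain ⟨ι, a, -, hspan, hli⟩ := exists_linearIndependent' ℝ fun v : A => (v : Ed d)
  have := hli.finite
  have := Fintype.ofFinite ι
  rw [Set.image_eq_range] at hA ⊢
  rw [← hspan] at hA ⊢
  obtain ⟨C, hC, hCB⟩ := (Module.Basis.span hli).exists_opNorm_le (F := Ed d)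
  refine ⟨ι, this, fun i => a i, Real.log C, fun i => (a i).2, fun g c => ?_⟩
  rw [← Real.log_exp (c + _), ← Real.log_mul hC.ne' (Real.exp_pos _).ne']
  refine Real.log_le_log (restrNorm_pos hA g) (hCB (Real.exp_pos _).le fun i => ?_)
  have hi : |normCocycle g (a i) - c| ≤ ∑ j, |normCocycle g (a j) - c| :=
    Finset.single_le_sum (f := fun j => |normCocycle g (a j) - c|)
      (fun _ _ => abs_nonneg _) (Finset.mem_univ i)
  have hbasis : (Module.Basis.span hli i : Ed d) = a i := by rw [Module.Basis.span_apply]; rfl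
  rw [ContinuousLinearMap.comp_apply, Submodule.subtypeL_apply, hbasis,
    ← Real.log_le_iff_le_exp (norm_glCLM_pos g (a i))]
  exact (sub_le_iff_le_add'.1 (le_abs_self _)).trans (add_le_add_right hi c)

end RestrNorm

/-! ### Square deviations of the norm cocycle -/

/-- The mean square deviation of `log ‖g v‖` from `n l` after `n` steps. -/
def sqDev (μ : Measure (GLd d)) (l : ℝ) (n : ℕ) (v : UnitSphere d) : ℝ :=
  ∫ g, (normCocycle g v - n * l) ^ 2 ∂mconvN μ n

lemma sqDev_nonneg (μ : Measure (GLd d)) (l : ℝ) (n : ℕ) (v : UnitSphere d) : 0 ≤ sqDev μ l n v :=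
  integral_nonneg fun _ => sq_nonneg _

lemma integral_const_add_sq {Ω : Type*} [MeasurableSpace Ω] {P : Measure Ω}
    [IsProbabilityMeasure P] {X : Ω → ℝ} (hX : MemLp X 2 P) (a : ℝ) :
    ∫ ω, (a + X ω) ^ 2 ∂P = a ^ 2 + 2 * a * ∫ ω, X ω ∂P + ∫ ω, X ω ^ 2 ∂P := by
  have hX₁ : Integrable X P := hX.integrable one_le_two
  simp_rw [add_sq]
  rw [integral_add (by fun_prop) hX.integrable_sq, integral_add (by fun_prop) (by fun_prop),
    integral_const_mul, integral_const]
  simp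

lemma integral_abs_le_sqrt_integral_sq {Ω : Type*} [MeasurableSpace Ω] {P : Measure Ω}
    [IsProbabilityMeasure P] {X : Ω → ℝ} (hX : MemLp X 2 P) :
    ∫ ω, |X ω| ∂P ≤ √(∫ ω, X ω ^ 2 ∂P) := by
  refine Real.le_sqrt_of_sq_le ?_
  have h := ProbabilityTheory.variance_nonneg |X| P
  rw [ProbabilityTheory.variance_eq_sub hX.abs] at h
  simpa using h

section SqDev

variable {μ : Measure (GLd d)} [IsCompactProbability μ]

@[fun_prop]
lemma continuous_sqDev (l : ℝ) (n : ℕ) : Continuous (sqDev μ l n) :=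
  continuous_integral_of_isCompactProbability (by simp only [Function.uncurry_def]; fun_prop)

lemma memLp_two_of_continuous {f : GLd d → ℝ} (hf : Continuous f) : MemLp f 2 μ :=
  (memLp_two_iff_integrable_sq hf.aestronglyMeasurable).2 <|
    integrable_of_continuous μ (by fun_prop)

lemma sqDev_succ (l : ℝ) (n : ℕ) (v : UnitSphere d) :
    sqDev μ l (n + 1) v = ∫ h, ((normCocycle h v - l) ^ 2 +
      2 * (normCocycle h v - l) * (meanCocycle μ n (h • v) - n * l) + sqDev μ l n (h • v)) ∂μ := by
  rw [sqDev, mconvN_succ, integral_mconv_eq (by fun_prop)]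
  congr with h
  have hsplit (g : GLd d) : normCocycle (g * h) v - (n + 1 : ℕ) * l =
      (normCocycle h v - l) + (normCocycle g (h • v) - n * l) := by
    rw [normCocycle_mul]
    push_cast
    ring
  simp_rw [hsplit]
  rw [integral_const_add_sq (memLp_two_of_continuous (by fun_prop)),
    integral_sub (integrable_of_continuous _ (by fun_prop)) (integrable_const _), integral_const]
  simp [meanCocycle, sqDev]

lemma sqDev_succ_le {l K : ℝ} (hK : ∀ᵐ h ∂μ, ∀ v : UnitSphere d, |normCocycle h v - l| ≤ K)
    (n : ℕ) (v : UnitSphere d) :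
    sqDev μ l (n + 1) v ≤
      ∫ h, (K ^ 2 + 2 * K * |meanCocycle μ n (h • v) - n * l| + sqDev μ l n (h • v)) ∂μ := by
  rw [sqDev_succ]
  refine integral_mono_ae (integrable_of_continuous _ (by fun_prop))
    (integrable_of_continuous _ (by fun_prop)) ?_
  filter_upwards [hK] with h hh
  gcongr ?_ + ?_ + _
  · exact sq_le_sq' (abs_le.1 (hh v)).1 (abs_le.1 (hh v)).2
  · rw [mul_assoc, mul_assoc]
    refine mul_le_mul_of_nonneg_left ((le_abs_self _).trans ?_) zero_le_two
    rw [abs_mul]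
    exact mul_le_mul_of_nonneg_right (hh v) (abs_nonneg _)

lemma integral_abs_normCocycle_sub_le (l : ℝ) (n : ℕ) (v : UnitSphere d) :
    ∫ g, |normCocycle g v - n * l| ∂mconvN μ n ≤ √(sqDev μ l n v) :=
  integral_abs_le_sqrt_integral_sq (memLp_two_of_continuous (by fun_prop))

theorem growth_le_of_tendsto_sqDev (A : Set (UnitSphere d))
    (hA : Submodule.span ℝ ((↑) '' A : Set (Ed d)) ≠ ⊥) {l m : ℝ} {ns : ℕ → ℕ}
    (hns : Tendsto ns atTop atTop)
    (hdev : ∀ v ∈ A, Tendsto (fun k => sqDev μ l (ns k) v / (ns k : ℝ) ^ 2) atTop (𝓝 0))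
    (hm : Tendsto (fun n : ℕ => (n : ℝ)⁻¹ *
      ∫ g, Real.log (restrNorm (Submodule.span ℝ ((↑) '' A)) g) ∂mconvN μ n) atTop (𝓝 m)) :
    m ≤ l := by
  obtain ⟨ι, _, w, C, hw, hC⟩ := exists_log_restrNorm_le A hA
  have hbound (n : ℕ) (hn : 0 < n) :
      (n : ℝ)⁻¹ * ∫ g, Real.log (restrNorm (Submodule.span ℝ ((↑) '' A)) g) ∂mconvN μ n ≤
        C * (n : ℝ)⁻¹ + (l + ∑ i, √(sqDev μ l n (w i) / (n : ℝ) ^ 2)) := by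
    have hint (i : ι) : Integrable (fun g => |normCocycle g (w i) - n * l|) (mconvN μ n) :=
      integrable_of_continuous _ (by fun_prop)
    have hsum : Integrable (fun g => ∑ i, |normCocycle g (w i) - n * l|) (mconvN μ n) :=
      integrable_finsetSum _ fun i _ => hint i
    calc (n : ℝ)⁻¹ * ∫ g, Real.log (restrNorm (Submodule.span ℝ ((↑) '' A)) g) ∂mconvN μ n
        ≤ (n : ℝ)⁻¹ * ∫ g, (C + (n * l + ∑ i, |normCocycle g (w i) - n * l|)) ∂mconvN μ n := by
          refine mul_le_mul_of_nonneg_left (integral_mono ?_ ?_ fun g => hC g (n * l))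
            (by positivity)
          · exact integrable_of_continuous (mconvN μ n) (continuous_log_restrNorm hA)
          · exact integrable_of_continuous _ (by fun_prop)
      _ = (n : ℝ)⁻¹ * (C + (n * l + ∑ i, ∫ g, |normCocycle g (w i) - n * l| ∂mconvN μ n)) := by
          rw [integral_add (by fun_prop) (by fun_prop), integral_add (by fun_prop) hsum,
            integral_finsetSum _ fun i _ => hint i]
          simp
      _ ≤ (n : ℝ)⁻¹ * (C + (n * l + ∑ i, √(sqDev μ l n (w i)))) := by
          gcongr
          exact integral_abs_normCocycle_sub_le l n _
      _ = C * (n : ℝ)⁻¹ + (l + ∑ i, √(sqDev μ l n (w i) / (n : ℝ) ^ 2)) := by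
          simp_rw [Real.sqrt_div (sqDev_nonneg _ _ _ _), Real.sqrt_sq n.cast_nonneg,
            ← Finset.sum_div]
          field_simp
  have hlim : Tendsto (fun k => C * (ns k : ℝ)⁻¹ +
      (l + ∑ i, √(sqDev μ l (ns k) (w i) / (ns k : ℝ) ^ 2))) atTop
      (𝓝 (C * 0 + (l + ∑ _i : ι, √0))) :=
    ((tendsto_natCast_atTop_atTop.comp hns).inv_tendsto_atTop.const_mul C).add <|
      (tendsto_finsetSum _ fun i _ => (hdev _ (hw i)).sqrt).const_add l
  simpa using le_of_tendsto_of_tendsto (hm.comp hns) hlim <| by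
    filter_upwards [hns.eventually_gt_atTop 0] with k hk using hbound _ hk

end SqDev

/-! ### The least mean growth over all directions -/

/-- The minimum over all directions `v` of the mean cocycle after `n` steps. -/
def minMeanCocycle (μ : Measure (GLd d)) (n : ℕ) : ℝ := ⨅ v, meanCocycle μ n v

section MinMeanCocycle

variable {μ : Measure (GLd d)} [IsCompactProbability μ]

lemma minMeanCocycle_le (n : ℕ) (v : UnitSphere d) : minMeanCocycle μ n ≤ meanCocycle μ n v :=
  ciInf_le (isCompact_range (continuous_meanCocycle n)).bddBelow v

variable [NeZero d]

lemma exists_meanCocycle_eq_minMeanCocycle (n : ℕ) :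
    ∃ v, meanCocycle μ n v = minMeanCocycle μ n :=
  (isCompact_range (continuous_meanCocycle n)).sInf_mem (Set.range_nonempty _)

lemma minMeanCocycle_add_le (n m : ℕ) :
    minMeanCocycle μ n + minMeanCocycle μ m ≤ minMeanCocycle μ (n + m) := by
  obtain ⟨v, hv⟩ := exists_meanCocycle_eq_minMeanCocycle (μ := μ) (n + m)
  have hint : Integrable (fun h => normCocycle h v) (mconvN μ m) :=
    integrable_of_continuous _ (by fun_prop)
  calc minMeanCocycle μ n + minMeanCocycle μ m
      ≤ minMeanCocycle μ n + meanCocycle μ m v := by gcongr; exact minMeanCocycle_le m v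
    _ = ∫ h, (normCocycle h v + minMeanCocycle μ n) ∂mconvN μ m := by
        rw [integral_add hint (integrable_const _), integral_const, add_comm]
        simp [meanCocycle]
    _ ≤ ∫ h, (normCocycle h v + meanCocycle μ n (h • v)) ∂mconvN μ m := by
        refine integral_mono (by fun_prop) (integrable_of_continuous _ (by fun_prop)) fun h => ?_
        gcongr
        exact minMeanCocycle_le n _
    _ = minMeanCocycle μ (n + m) := by rw [← hv, meanCocycle_add]

variable (μ) in
lemma exists_tendsto_minMeanCocycle_div :
    ∃ β : ℝ, (∀ n : ℕ, minMeanCocycle μ n ≤ n * β) ∧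
      Tendsto (fun n : ℕ => minMeanCocycle μ n / n) atTop (𝓝 β) := by
  have hsub : Subadditive fun n => -minMeanCocycle μ n := fun n m => by
    linarith [minMeanCocycle_add_le (μ := μ) n m]
  obtain ⟨K, hK0, hK⟩ := exists_ae_abs_normCocycle_le μ
  have habs (n : ℕ) : |minMeanCocycle μ n| ≤ K * n := by
    obtain ⟨v, hv⟩ := exists_meanCocycle_eq_minMeanCocycle (μ := μ) n
    exact hv ▸ abs_meanCocycle_le hK n v
  have hbdd : BddBelow (Set.range fun n : ℕ => -minMeanCocycle μ n / n) := by
    refine ⟨-K, ?_⟩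
    rintro _ ⟨n, rfl⟩
    simp only [neg_div, neg_le_neg_iff]
    exact div_le_of_le_mul₀ n.cast_nonneg hK0 ((le_abs_self _).trans (habs n))
  refine ⟨-hsub.lim, fun n => ?_, (hsub.tendsto_lim hbdd).neg.congr fun n => by ring⟩
  rcases n.eq_zero_or_pos with rfl | hn
  · simpa using (le_abs_self _).trans (habs 0)
  · have := hsub.lim_le_div hbdd hn.ne'
    rw [le_div_iff₀ (by positivity)] at this
    linarith

end MinMeanCocycle

/-! ### Stationary measures -/

/-- The mean `∫ f (g v) dμ^{*k}(g)` of an observable after `k` steps of the random walk. -/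
def markovIter {E : Type*} [NormedAddCommGroup E] [NormedSpace ℝ E] (μ : Measure (GLd d)) (k : ℕ)
    (f : UnitSphere d → E) (v : UnitSphere d) : E :=
  ∫ g, f (g • v) ∂mconvN μ k

section MarkovIter

variable {E : Type*} [NormedAddCommGroup E] [NormedSpace ℝ E] {μ : Measure (GLd d)}
  {f : UnitSphere d → E}

lemma markovIter_one (v : UnitSphere d) : markovIter μ 1 f v = ∫ g, f (g • v) ∂μ := by
  rw [markovIter, mconvN_one]

variable [IsCompactProbability μ]

lemma continuous_markovIter (hf : Continuous f) (k : ℕ) : Continuous (markovIter μ k f) :=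
  continuous_integral_of_isCompactProbability (by simp only [Function.uncurry_def]; fun_prop)

lemma markovIter_succ (hf : Continuous f) (k : ℕ) (v : UnitSphere d) :
    markovIter μ (k + 1) f v = markovIter μ k (markovIter μ 1 f) v := by
  rw [markovIter, add_comm, mconvN_add, integral_mconv_eq (by fun_prop)]
  simp only [markovIter, mul_smul]

lemma norm_markovIter_le {C : ℝ} (hC : ∀ v, ‖f v‖ ≤ C) (k : ℕ) (v : UnitSphere d) :
    ‖markovIter μ k f v‖ ≤ C := by
  simpa [markovIter] using norm_integral_le_of_norm_le_const (μ := mconvN μ k)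
    (f := fun g => f (g • v)) (Eventually.of_forall fun g => hC _)

lemma sum_markovIter_meanCocycle_one (n : ℕ) (v : UnitSphere d) :
    ∑ k ∈ Finset.range n, markovIter μ k (meanCocycle μ 1) v = meanCocycle μ n v := by
  induction n with
  | zero => simp [meanCocycle_zero]
  | succ n ih =>
    rw [Finset.sum_range_succ, ih, add_comm n 1, meanCocycle_add,
      integral_add (integrable_of_continuous _ (by fun_prop))
        (integrable_of_continuous _ (by fun_prop))]
    rfl

end MarkovIter

/-- The average of the laws of the first `n` positions of the random walk started at `v`. -/
def empiricalMeasure (μ : Measure (GLd d)) (v : UnitSphere d) (n : ℕ) : Measure (UnitSphere d) :=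
  (n : ENNReal)⁻¹ • ∑ k ∈ Finset.range n, (mconvN μ k).map (· • v)

/-- The measure `η` on the unit sphere is invariant under the random walk driven by `μ`. -/
def IsSphereStationary (μ : Measure (GLd d)) (η : Measure (UnitSphere d)) : Prop :=
  (μ.prod η).map (fun p => p.1 • p.2) = η

lemma integrable_of_compactSpace {X E : Type*} [TopologicalSpace X] [T2Space X] [CompactSpace X]
    [MeasurableSpace X] [OpensMeasurableSpace X] [NormedAddCommGroup E] (η : Measure X)
    [IsFiniteMeasure η] {f : X → E} (hf : Continuous f) : Integrable f η :=
  integrable_of_measure_compl_eq_zero isCompact_univ (by simp) hf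

lemma exists_tendsto_integral {X ι : Type*} [TopologicalSpace X] [T2Space X] [CompactSpace X]
    [MeasurableSpace X] [BorelSpace X] (U : Ultrafilter ι)
    (e : ι → Measure X) [∀ i, IsProbabilityMeasure (e i)] :
    ∃ η : Measure X, IsProbabilityMeasure η ∧ ∀ f : X → ℝ, Continuous f →
      Tendsto (fun i => ∫ x, f x ∂e i) U (𝓝 (∫ x, f x ∂η)) := by
  let e' (i : ι) : ProbabilityMeasure X := ⟨e i, inferInstance⟩
  obtain ⟨η, hη⟩ : ∃ η, Tendsto e' U (𝓝 η) := ⟨_, (U.map e').le_nhds_lim⟩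
  rw [ProbabilityMeasure.tendsto_iff_forall_integral_tendsto] at hη
  exact ⟨η, inferInstance, fun f hf => hη (.mkOfCompact ⟨f, hf⟩)⟩

section Stationary

variable {μ : Measure (GLd d)} [IsCompactProbability μ]

instance (v : UnitSphere d) (n : ℕ) [NeZero n] :
    IsProbabilityMeasure (empiricalMeasure μ v n) := by
  have hmap (k : ℕ) : (mconvN μ k).map (· • v) Set.univ = 1 := by
    rw [Measure.map_apply (by fun_prop) MeasurableSet.univ]
    simp
  refine ⟨?_⟩
  simp only [empiricalMeasure, Measure.smul_apply, Measure.finsetSum_apply, hmap]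
  simpa using ENNReal.inv_mul_cancel (by simp [NeZero.ne n]) (by simp)

lemma integral_empiricalMeasure {f : UnitSphere d → ℝ} (hf : Continuous f) (v : UnitSphere d)
    (n : ℕ) : ∫ x, f x ∂empiricalMeasure μ v n =
      (n : ℝ)⁻¹ * ∑ k ∈ Finset.range n, markovIter μ k f v := by
  have hm : Measurable fun g : GLd d => g • v := by fun_prop
  rw [empiricalMeasure, integral_smul_measure,
    integral_finsetSum_measure fun k _ => integrable_of_compactSpace _ hf]
  simp only [integral_map hm.aemeasurable hf.aestronglyMeasurable, ENNReal.toReal_inv,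
    ENNReal.toReal_natCast, smul_eq_mul, markovIter]

lemma integral_map_smul (η : Measure (UnitSphere d)) [IsFiniteMeasure η]
    {f : UnitSphere d → ℝ} (hf : Continuous f) :
    ∫ v, f v ∂(μ.prod η).map (fun p => p.1 • p.2) = ∫ v, markovIter μ 1 f v ∂η := by
  have hm : Measurable fun p : GLd d × UnitSphere d => p.1 • p.2 := by fun_prop
  rw [integral_map hm.aemeasurable hf.aestronglyMeasurable, integral_prod_symm]
  · simp only [markovIter_one]
  · exact (integrable_of_compactSpace _ hf).comp_measurable hm

lemma tendsto_integral_empiricalMeasure_markovIter_sub {f : UnitSphere d → ℝ} (hf : Continuous f)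
    (vs : ℕ → UnitSphere d) :
    Tendsto (fun n => ∫ v, markovIter μ 1 f v ∂empiricalMeasure μ (vs n) n -
      ∫ v, f v ∂empiricalMeasure μ (vs n) n) atTop (𝓝 0) := by
  obtain ⟨C, hC⟩ := isCompact_univ.exists_bound_of_continuousOn (f := f) hf.continuousOn
  have htelescope (n : ℕ) : ∫ v, markovIter μ 1 f v ∂empiricalMeasure μ (vs n) n -
      ∫ v, f v ∂empiricalMeasure μ (vs n) n =
      (n : ℝ)⁻¹ * (markovIter μ n f (vs n) - markovIter μ 0 f (vs n)) := by
    rw [integral_empiricalMeasure (continuous_markovIter hf 1), integral_empiricalMeasure hf,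
      ← mul_sub, ← Finset.sum_sub_distrib, ← Finset.sum_range_sub (markovIter μ · f (vs n))]
    simp_rw [markovIter_succ hf]
  simp_rw [htelescope]
  refine tendsto_inv_atTop_nhds_zero_nat.zero_mul_isBoundedUnder_le <|
    isBoundedUnder_of ⟨C + C, fun n => (norm_sub_le _ _).trans ?_⟩
  exact add_le_add (norm_markovIter_le (fun v => hC v trivial) n _)
    (norm_markovIter_le (fun v => hC v trivial) 0 _)

/-- `η` is a limit point of the empirical measures of the walks started at the points `vs n`. -/
theorem exists_isSphereStationary {β : ℝ} {vs : ℕ → UnitSphere d}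
    (hβ : Tendsto (fun n : ℕ => meanCocycle μ n (vs n) / n) atTop (𝓝 β)) :
    ∃ η : Measure (UnitSphere d), IsProbabilityMeasure η ∧ IsSphereStationary μ η ∧
      ∫ v, meanCocycle μ 1 v ∂η = β := by
  have hU : Tendsto (· + 1) (hyperfilter ℕ : Filter ℕ) atTop :=
    (tendsto_add_atTop_nat 1).mono_left (Nat.hyperfilter_le_atTop)
  obtain ⟨η, hηp, hη⟩ := exists_tendsto_integral (hyperfilter ℕ)
    fun n => empiricalMeasure μ (vs (n + 1)) (n + 1)
  refine ⟨η, hηp, ?_, ?_⟩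
  · have : IsProbabilityMeasure ((μ.prod η).map fun p => p.1 • p.2) :=
      Measure.isProbabilityMeasure_map (by fun_prop)
    refine ext_of_forall_integral_eq_of_IsFiniteMeasure fun f => ?_
    rw [integral_map_smul η f.continuous]
    exact sub_eq_zero.1 <| tendsto_nhds_unique
      ((hη _ (continuous_markovIter f.continuous 1)).sub (hη f f.continuous))
      ((tendsto_integral_empiricalMeasure_markovIter_sub f.continuous vs).comp hU)
  · refine tendsto_nhds_unique (hη _ (continuous_meanCocycle 1)) ((hβ.comp hU).congr fun n => ?_)
    rw [integral_empiricalMeasure (continuous_meanCocycle 1), sum_markovIter_meanCocycle_one,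
      Function.comp_apply, div_eq_inv_mul]

end Stationary

namespace IsSphereStationary

variable {μ : Measure (GLd d)} [IsCompactProbability μ] {η : Measure (UnitSphere d)}
  [IsProbabilityMeasure η] (hη : IsSphereStationary μ η)
include hη

lemma integral_markovIter_one {f : UnitSphere d → ℝ} (hf : Continuous f) :
    ∫ v, markovIter μ 1 f v ∂η = ∫ v, f v ∂η := by
  rw [← integral_map_smul η hf, hη]

lemma integral_meanCocycle (n : ℕ) :
    ∫ v, meanCocycle μ n v ∂η = n * ∫ v, meanCocycle μ 1 v ∂η := by
  induction n with
  | zero => simp [meanCocycle_zero]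
  | succ n ih =>
    have hsplit (v : UnitSphere d) :
        meanCocycle μ (n + 1) v = meanCocycle μ 1 v + markovIter μ 1 (meanCocycle μ n) v := by
      rw [meanCocycle_succ, meanCocycle_one, markovIter_one,
        integral_add (integrable_of_continuous μ (by fun_prop))
          (integrable_of_continuous μ (by fun_prop))]
    simp_rw [hsplit]
    rw [integral_add (integrable_of_compactSpace _ (by fun_prop))
      (integrable_of_compactSpace _ (continuous_markovIter (by fun_prop) 1)),
      hη.integral_markovIter_one (by fun_prop), ih]
    push_cast
    ring

lemma integral_abs_meanCocycle_sub_le {β : ℝ} (hβ : ∫ v, meanCocycle μ 1 v ∂η = β) (n : ℕ) :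
    ∫ v, |meanCocycle μ n v - n * β| ∂η ≤ 2 * (n * β - minMeanCocycle μ n) := by
  have hint : Integrable (meanCocycle μ n) η := integrable_of_compactSpace _ (by fun_prop)
  have hmean : ∫ v, meanCocycle μ n v ∂η = n * β := by rw [hη.integral_meanCocycle, hβ]
  have hmin : minMeanCocycle μ n ≤ n * β := by
    simpa [hmean] using integral_mono (integrable_const _) hint fun v => minMeanCocycle_le n v
  calc ∫ v, |meanCocycle μ n v - n * β| ∂η
      ≤ ∫ v, (meanCocycle μ n v + (n * β - 2 * minMeanCocycle μ n)) ∂η := by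
        refine integral_mono (by fun_prop) (by fun_prop) fun v => abs_le.2 ?_
        constructor <;> linarith [minMeanCocycle_le (μ := μ) n v]
    _ = 2 * (n * β - minMeanCocycle μ n) := by
        rw [integral_add hint (integrable_const _), hmean, integral_const]
        simp only [probReal_univ, one_smul]
        ring

lemma integral_sqDev_succ_le {β K : ℝ} (hK₀ : 0 ≤ K)
    (hK : ∀ᵐ h ∂μ, ∀ v : UnitSphere d, |normCocycle h v - β| ≤ K)
    (hβ : ∫ v, meanCocycle μ 1 v ∂η = β) (n : ℕ) :
    ∫ v, sqDev μ β (n + 1) v ∂η ≤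
      (K ^ 2 + 4 * K * (n * β - minMeanCocycle μ n)) + ∫ v, sqDev μ β n v ∂η := by
  let F (v : UnitSphere d) : ℝ := K ^ 2 + 2 * K * |meanCocycle μ n v - n * β| + sqDev μ β n v
  have hF : Continuous F := by fun_prop
  have habs : Integrable (fun v => |meanCocycle μ n v - n * β|) η :=
    integrable_of_compactSpace _ (by fun_prop)
  have hdev : Integrable (sqDev μ β n) η := integrable_of_compactSpace _ (by fun_prop)
  calc ∫ v, sqDev μ β (n + 1) v ∂η
      ≤ ∫ v, markovIter μ 1 F v ∂η :=
        integral_mono (integrable_of_compactSpace _ (by fun_prop))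
          (integrable_of_compactSpace _ (continuous_markovIter hF 1)) fun v =>
            (sqDev_succ_le hK n v).trans_eq (markovIter_one (f := F) v).symm
    _ = (K ^ 2 + 2 * K * ∫ v, |meanCocycle μ n v - n * β| ∂η) + ∫ v, sqDev μ β n v ∂η := by
        rw [hη.integral_markovIter_one hF, integral_add (by fun_prop) hdev,
          integral_add (by fun_prop) (by fun_prop), integral_const_mul, integral_const]
        simp
    _ ≤ (K ^ 2 + 2 * K * (2 * (n * β - minMeanCocycle μ n))) + ∫ v, sqDev μ β n v ∂η := by
        gcongr
        exact hη.integral_abs_meanCocycle_sub_le hβ n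
    _ = (K ^ 2 + 4 * K * (n * β - minMeanCocycle μ n)) + ∫ v, sqDev μ β n v ∂η := by ring

end IsSphereStationary

lemma tendsto_sum_div_sq {u : ℕ → ℝ} (hu₀ : ∀ k, 0 ≤ u k)
    (hu : Tendsto (fun k : ℕ => u k / k) atTop (𝓝 0)) :
    Tendsto (fun n : ℕ => (∑ k ∈ Finset.range n, u k) / (n : ℝ) ^ 2) atTop (𝓝 0) := by
  have hu' : Tendsto (fun k : ℕ => u k / (k + 1)) atTop (𝓝 0) := by
    refine squeeze_zero' (Eventually.of_forall fun k => div_nonneg (hu₀ k) (by positivity)) ?_ hu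
    filter_upwards [eventually_gt_atTop 0] with k hk
    exact div_le_div_of_nonneg_left (hu₀ k) (by positivity) (by linarith)
  refine squeeze_zero (fun n => div_nonneg (Finset.sum_nonneg fun k _ => hu₀ k) (by positivity))
    (fun n => ?_) hu'.cesaro
  rw [sq, ← div_div, div_eq_inv_mul, Finset.sum_div]
  gcongr with k hk
  · exact hu₀ k
  · exact_mod_cast Finset.mem_range.1 hk

namespace IsSphereStationary

variable {μ : Measure (GLd d)} [IsCompactProbability μ] {η : Measure (UnitSphere d)}
  [IsProbabilityMeasure η]

theorem tendsto_integral_sqDev_div_sq (hη : IsSphereStationary μ η) {β : ℝ}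
    (hβ : ∫ v, meanCocycle μ 1 v ∂η = β) (hmin : ∀ n : ℕ, minMeanCocycle μ n ≤ n * β)
    (hlim : Tendsto (fun n : ℕ => minMeanCocycle μ n / n) atTop (𝓝 β)) :
    Tendsto (fun n : ℕ => (∫ v, sqDev μ β n v ∂η) / (n : ℝ) ^ 2) atTop (𝓝 0) := by
  obtain ⟨K', hK'₀, hK'⟩ := exists_ae_abs_normCocycle_le μ
  set K := K' + |β|
  have hK₀ : 0 ≤ K := by positivity
  have hK : ∀ᵐ h ∂μ, ∀ v : UnitSphere d, |normCocycle h v - β| ≤ K := by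
    filter_upwards [hK'] with h hh v using (abs_sub _ _).trans (by linarith [hh v])
  set u : ℕ → ℝ := fun k => K ^ 2 + 4 * K * (k * β - minMeanCocycle μ k)
  have hbound (n : ℕ) : ∫ v, sqDev μ β n v ∂η ≤ ∑ k ∈ Finset.range n, u k := by
    induction n with
    | zero => simp [sqDev, mconvN_zero, normCocycle_one]
    | succ n ih =>
      rw [Finset.sum_range_succ]
      linarith [hη.integral_sqDev_succ_le hK₀ hK hβ n]
  have hu₀ (k : ℕ) : 0 ≤ u k := by
    have := sub_nonneg.2 (hmin k)
    positivity
  have hu : Tendsto (fun k => u k / k) atTop (𝓝 0) := by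
    have := (tendsto_const_div_atTop_nhds_zero_nat (K ^ 2)).add
      ((tendsto_const_nhds (x := β).sub hlim).const_mul (4 * K))
    simp only [sub_self, mul_zero, add_zero] at this
    refine this.congr' ?_
    filter_upwards [eventually_gt_atTop 0] with n hn
    simp only [u]
    field_simp
  refine squeeze_zero (fun n => div_nonneg (integral_nonneg fun v => sqDev_nonneg _ _ _ _)
    (by positivity)) (fun n => ?_) (tendsto_sum_div_sq hu₀ hu)
  gcongr
  exact hbound n

end IsSphereStationary

lemma exists_seq_tendsto_ae_of_tendsto_integral {X : Type*} [MeasurableSpace X] {η : Measure X}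
    {F : ℕ → X → ℝ} (hF : ∀ n, Integrable (F n) η) (hF₀ : ∀ n x, 0 ≤ F n x)
    (hlim : Tendsto (fun n => ∫ x, F n x ∂η) atTop (𝓝 0)) :
    ∃ ns : ℕ → ℕ, Tendsto ns atTop atTop ∧
      ∀ᵐ x ∂η, Tendsto (fun k => F (ns k) x) atTop (𝓝 0) := by
  have hnorm (n : ℕ) : eLpNorm (F n - 0) 1 η = ENNReal.ofReal (∫ x, F n x ∂η) := by
    rw [sub_zero, eLpNorm_one_eq_lintegral_enorm,
      ofReal_integral_eq_lintegral_ofReal (hF n) (Eventually.of_forall (hF₀ n))]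
    exact lintegral_congr fun x => Real.enorm_eq_ofReal (hF₀ n x)
  have hmeas : TendstoInMeasure η F atTop 0 := by
    refine tendstoInMeasure_of_tendsto_eLpNorm one_ne_zero (fun n => (hF n).aestronglyMeasurable)
      aestronglyMeasurable_zero ?_
    simp_rw [hnorm]
    simpa using ENNReal.tendsto_ofReal hlim
  obtain ⟨ns, hns, hae⟩ := hmeas.exists_seq_tendsto_ae
  exact ⟨ns, hns.tendsto_atTop, hae⟩

/-! ### Quasi-irreducibility forces uniform growth -/

lemma exists_minimal_ae_mem (R : Type*) {X F : Type*} [MeasurableSpace X] (η : Measure X)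
    [Semiring R] [AddCommMonoid F] [Module R F] [IsArtinian R F] (f : X → F) :
    ∃ V : Submodule R F, (∀ᵐ x ∂η, f x ∈ V) ∧ ∀ W : Submodule R F, (∀ᵐ x ∂η, f x ∈ W) → V ≤ W := by
  obtain ⟨V, hV, hmin⟩ := WellFounded.has_min (wellFounded_lt (α := Submodule R F))
    {V | ∀ᵐ v ∂η, f v ∈ V} ⟨⊤, by simp⟩
  refine ⟨V, hV, fun W hW => inf_eq_left.1 <| by_contra fun hne => ?_⟩
  refine hmin (V ⊓ W) ?_ (lt_of_le_of_ne inf_le_left hne)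
  filter_upwards [hV, hW] with v hvV hvW using ⟨hvV, hvW⟩

lemma IsSphereStationary.ae_map_eq_of_minimal {μ : Measure (GLd d)}
    {η : Measure (UnitSphere d)} [SFinite η] (hη : IsSphereStationary μ η)
    {V : Submodule ℝ (Ed d)} (hV : ∀ᵐ v : UnitSphere d ∂η, (v : Ed d) ∈ V)
    (hmin : ∀ W : Submodule ℝ (Ed d), (∀ᵐ v : UnitSphere d ∂η, (v : Ed d) ∈ W) → V ≤ W) :
    ∀ᵐ g ∂μ, V.map (glCLM g).toLinearMap = V := by
  have hmeas : MeasurableSet {v : UnitSphere d | (v : Ed d) ∈ V} :=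
    (V.closed_of_finiteDimensional.preimage continuous_subtype_val).measurableSet
  have hprod : ∀ᵐ p ∂μ.prod η, ((p.1 • p.2 : UnitSphere d) : Ed d) ∈ V := by
    rw [← hη] at hV
    exact (ae_map_iff (by fun_prop) hmeas).1 hV
  filter_upwards [Measure.ae_ae_of_ae_prod hprod] with g hg
  have hle : V ≤ V.comap (glCLM g).toLinearMap := by
    refine hmin _ ?_
    filter_upwards [hg] with v hv
    change glCLM g (v : Ed d) ∈ V
    rw [glCLM_eq_smul]
    exact V.smul_mem _ hv
  exact Submodule.eq_of_le_of_finrank_le (Submodule.map_le_iff_le_comap.2 hle)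
    (Submodule.equivMapOfInjective _ (glLinear_injective g) V).finrank_eq.le

theorem QuasiIrreducible.exists_L1_le_tendsto_minMeanCocycle_div [NeZero d] {μ : Measure (GLd d)}
    [IsCompactProbability μ] (hμ : QuasiIrreducible μ) :
    ∃ β, L1 μ ≤ β ∧ Tendsto (fun n : ℕ => minMeanCocycle μ n / n) atTop (𝓝 β) := by
  obtain ⟨β, hle, hlim⟩ := exists_tendsto_minMeanCocycle_div μ
  refine ⟨β, ?_, hlim⟩
  choose vs hvs using exists_meanCocycle_eq_minMeanCocycle (μ := μ)
  obtain ⟨η, _, hη, hβ⟩ := exists_isSphereStationary (μ := μ) (β := β) (vs := vs)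
    (by simpa only [hvs] using hlim)
  have hdev := hη.tendsto_integral_sqDev_div_sq hβ hle hlim
  simp_rw [← integral_div] at hdev
  obtain ⟨ns, hns, hae⟩ := exists_seq_tendsto_ae_of_tendsto_integral
    (fun n => integrable_of_compactSpace _ (by fun_prop))
    (fun n v => div_nonneg (sqDev_nonneg _ _ _ _) (by positivity)) hdev
  obtain ⟨V, hV, hmin⟩ := exists_minimal_ae_mem ℝ η ((↑) : UnitSphere d → Ed d)
  have hinv := hη.ae_map_eq_of_minimal hV hmin
  have hVbot : V ≠ ⊥ := by
    rintro rfl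
    obtain ⟨v, hv⟩ := hV.exists
    exact v.coe_ne_zero (by simpa using hv)
  set A : Set (UnitSphere d) := {v | (v : Ed d) ∈ V ∧
    Tendsto (fun k => sqDev μ β (ns k) v / (ns k : ℝ) ^ 2) atTop (𝓝 0)}
  have hspan : V = Submodule.span ℝ ((↑) '' A) := by
    refine le_antisymm (hmin _ ?_) (Submodule.span_le.2 ?_)
    · filter_upwards [hV, hae] with v hvV hvlim
      exact Submodule.subset_span ⟨v, ⟨hvV, hvlim⟩, rfl⟩
    · rintro _ ⟨v, hv, rfl⟩
      exact hv.1
  have hVle : L1rest μ V ≤ β := by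
    rw [hspan] at hVbot hinv ⊢
    exact growth_le_of_tendsto_sqDev A hVbot hns (fun v hv => hv.2)
      (tendsto_integral_log_restrNorm hVbot hinv)
  rcases eq_or_ne V ⊤ with rfl | hVtop
  · rwa [L1rest_top] at hVle
  · exact le_of_not_gt fun hlt => hμ ⟨V, hVbot, hVtop, hinv, hVle.trans_lt hlt⟩

/-! ### Area expansion and contraction of angles -/

section GramDet

variable {E : Type*} [NormedAddCommGroup E] [InnerProductSpace ℝ E]

/-- The Gram determinant of two vectors, that is the squared area of the parallelogram they span. -/
def gramDet (x y : E) : ℝ := ‖x‖ ^ 2 * ‖y‖ ^ 2 - inner ℝ x y ^ 2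

lemma gramDet_nonneg (x y : E) : 0 ≤ gramDet x y := by
  rw [gramDet, sub_nonneg, ← mul_pow, ← sq_abs (inner ℝ x y)]
  exact pow_le_pow_left₀ (abs_nonneg _) (abs_real_inner_le_norm x y) 2

lemma gramDet_add_smul (x y : E) (c : ℝ) : gramDet x (y + c • x) = gramDet x y := by
  rw [gramDet, gramDet, norm_add_sq_real, inner_add_right, inner_smul_right, inner_smul_right,
    real_inner_self_eq_norm_sq, norm_smul, real_inner_comm x y, mul_pow, Real.norm_eq_abs, sq_abs]
  ring

lemma gramDet_smul_smul (x y : E) (a b : ℝ) :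
    gramDet (a • x) (b • y) = (a * b) ^ 2 * gramDet x y := by
  simp only [gramDet, inner_smul_left, inner_smul_right, norm_smul, mul_pow, Real.norm_eq_abs,
    sq_abs, conj_trivial]
  ring

end GramDet

/-- The orthonormal pairs of vectors of `ℝ^d`, over which `N2` is a supremum. -/
def orthonormalPairs (d : ℕ) : Set (Ed d × Ed d) :=
  {x | ‖x.1‖ = 1 ∧ ‖x.2‖ = 1 ∧ inner ℝ x.1 x.2 = 0}

lemma isCompact_orthonormalPairs : IsCompact (orthonormalPairs d) := by
  refine ((isCompact_closedBall (0 : Ed d) 1).prod (isCompact_closedBall 0 1)).of_isClosed_subset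
    ((isClosed_eq (by fun_prop) continuous_const).inter
      ((isClosed_eq (by fun_prop) continuous_const).inter
        (isClosed_eq (by fun_prop) continuous_const))) ?_
  rintro x ⟨h₁, h₂, -⟩
  simp [h₁, h₂]

lemma N2_eq_sSup (g : GLd d) :
    N2 g = sSup ((fun x : Ed d × Ed d => √(gramDet (glCLM g x.1) (glCLM g x.2))) ''
      orthonormalPairs d) := by
  rw [N2]
  congr 1
  ext
  simp [orthonormalPairs, gramDet, and_assoc, eq_comm]

lemma continuous_sqrt_gramDet_glCLM :
    Continuous fun y : GLd d × Ed d × Ed d => √(gramDet (glCLM y.1 y.2.1) (glCLM y.1 y.2.2)) := by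
  unfold gramDet
  fun_prop

@[fun_prop]
lemma continuous_N2 : Continuous (N2 (d := d)) := by
  simp_rw [funext N2_eq_sSup]
  exact isCompact_orthonormalPairs.continuous_sSup continuous_sqrt_gramDet_glCLM

lemma N2_nonneg (g : GLd d) : 0 ≤ N2 g := by
  refine Real.sSup_nonneg ?_
  rintro _ ⟨p, q, -, -, -, rfl⟩
  exact Real.sqrt_nonneg _

lemma sqrt_gramDet_glCLM_le_N2 (g : GLd d) {p q : Ed d} (hp : ‖p‖ = 1) (hq : ‖q‖ = 1)
    (hpq : inner ℝ p q = 0) : √(gramDet (glCLM g p) (glCLM g q)) ≤ N2 g := by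
  rw [N2_eq_sSup]
  refine le_csSup (isCompact_orthonormalPairs.bddAbove_image ?_) ⟨(p, q), ⟨hp, hq, hpq⟩, rfl⟩
  exact (continuous_sqrt_gramDet_glCLM.comp (Continuous.prodMk_right g)).continuousOn

lemma gramDet_glCLM_le_of_inner_eq_zero (g : GLd d) {v w : Ed d} (h : inner ℝ v w = 0) :
    gramDet (glCLM g v) (glCLM g w) ≤ N2 g ^ 2 * gramDet v w := by
  rcases eq_or_ne v 0 with rfl | hv
  · simp [gramDet]
  rcases eq_or_ne w 0 with rfl | hw
  · simp [gramDet]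
  have hunit : gramDet (glCLM g (‖v‖⁻¹ • v)) (glCLM g (‖w‖⁻¹ • w)) ≤ N2 g ^ 2 :=
    (Real.sqrt_le_left (N2_nonneg g)).1 <| sqrt_gramDet_glCLM_le_N2 g (by simp [norm_smul, hv])
      (by simp [norm_smul, hw]) (by simp [inner_smul_left, inner_smul_right, h])
  rw [map_smul, map_smul, gramDet_smul_smul] at hunit
  have hv' : 0 < ‖v‖ := norm_pos_iff.2 hv
  have hw' : 0 < ‖w‖ := norm_pos_iff.2 hw
  rw [← mul_inv, inv_pow, inv_mul_le_iff₀ (by positivity)] at hunit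
  rwa [gramDet.eq_def v w, h, zero_pow two_ne_zero, sub_zero, ← mul_pow, mul_comm]

lemma gramDet_glCLM_le (g : GLd d) (v w : Ed d) :
    gramDet (glCLM g v) (glCLM g w) ≤ N2 g ^ 2 * gramDet v w := by
  rcases eq_or_ne v 0 with rfl | hv
  · simp [gramDet]
  have hv' : ‖v‖ ≠ 0 := norm_ne_zero_iff.2 hv
  have horth : inner ℝ v (w + -(inner ℝ v w / ‖v‖ ^ 2) • v) = 0 := by
    rw [inner_add_right, inner_smul_right, real_inner_self_eq_norm_sq]
    field_simp
    ring
  simpa only [map_add, map_smul, gramDet_add_smul] using gramDet_glCLM_le_of_inner_eq_zero g horth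

lemma N2_mul_le (g h : GLd d) : N2 (g * h) ≤ N2 g * N2 h := by
  refine Real.sSup_le ?_ (mul_nonneg (N2_nonneg g) (N2_nonneg h))
  rintro _ ⟨p, q, hp, hq, hpq, rfl⟩
  rw [glCLM_mul_apply, glCLM_mul_apply]
  calc √(gramDet (glCLM g (glCLM h p)) (glCLM g (glCLM h q)))
      ≤ √(N2 g ^ 2 * gramDet (glCLM h p) (glCLM h q)) := Real.sqrt_le_sqrt (gramDet_glCLM_le _ _ _)
    _ = N2 g * √(gramDet (glCLM h p) (glCLM h q)) := by
        rw [Real.sqrt_mul (sq_nonneg _), Real.sqrt_sq (N2_nonneg g)]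
    _ ≤ N2 g * N2 h :=
        mul_le_mul_of_nonneg_left (sqrt_gramDet_glCLM_le_N2 h hp hq hpq) (N2_nonneg g)

section LogN2

variable [d.AtLeastTwo]

lemma one_le_N2_one : 1 ≤ N2 (1 : GLd d) := by
  have hij : (⟨0, NeZero.pos d⟩ : Fin d) ≠ ⟨1, Nat.AtLeastTwo.prop⟩ := by simp
  have horth := (EuclideanSpace.orthonormal_single (𝕜 := ℝ) (ι := Fin d)).2 hij
  have h := sqrt_gramDet_glCLM_le_N2 (1 : GLd d) (by simp) (by simp) horth
  rw [gramDet, glCLM_one] at h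
  simpa only [one_apply_eq_self, horth, PiLp.norm_single, norm_one, one_pow, mul_one, ne_eq,
    OfNat.ofNat_ne_zero, not_false_eq_true, zero_pow, sub_zero, Real.sqrt_one] using h

lemma N2_pos (g : GLd d) : 0 < N2 g := by
  have h := one_le_N2_one.trans (mul_inv_cancel g ▸ N2_mul_le g g⁻¹)
  exact pos_of_mul_pos_left (zero_lt_one.trans_le h) (N2_nonneg _)

@[fun_prop]
lemma continuous_log_N2 : Continuous fun g : GLd d => Real.log (N2 g) :=
  continuous_N2.log fun g => (N2_pos g).ne'

lemma log_N2_mul_le (g h : GLd d) : Real.log (N2 (g * h)) ≤ Real.log (N2 g) + Real.log (N2 h) := by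
  rw [← Real.log_mul (N2_pos g).ne' (N2_pos h).ne']
  exact Real.log_le_log (N2_pos _) (N2_mul_le g h)

end LogN2

lemma neg_integral_inv_mul_le_integral_mconvN (μ : Measure (GLd d)) [IsCompactProbability μ]
    {G : GLd d → ℝ} (hG : Continuous G) (hmul : ∀ g h, G (g * h) ≤ G g + G h) (n : ℕ) :
    -((∫ g, G g⁻¹ ∂μ) * n) ≤ ∫ g, G g ∂mconvN μ n := by
  induction n with
  | zero =>
    have := hmul 1 1
    rw [mul_one] at this
    simp only [mconvN_zero, integral_dirac, Nat.cast_zero, mul_zero, neg_zero]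
    linarith
  | succ n ih =>
    have hint : Integrable (fun h : GLd d => G h⁻¹) μ := integrable_of_continuous μ (by fun_prop)
    have hstep (h : GLd d) : (∫ g, G g ∂mconvN μ n) - G h⁻¹ ≤ ∫ g, G (g * h) ∂mconvN μ n := by
      have hG' : Integrable G (mconvN μ n) := integrable_of_continuous _ hG
      calc (∫ g, G g ∂mconvN μ n) - G h⁻¹ = ∫ g, (G g - G h⁻¹) ∂mconvN μ n := by
            simp [integral_sub hG' (integrable_const _)]
        _ ≤ ∫ g, G (g * h) ∂mconvN μ n := by
            refine integral_mono (by fun_prop) (integrable_of_continuous _ (by fun_prop)) ?_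
            intro g
            simpa using hmul (g * h) h⁻¹
    rw [mconvN_succ, integral_mconv_eq hG]
    calc -((∫ g, G g⁻¹ ∂μ) * (n + 1 : ℕ)) = -((∫ g, G g⁻¹ ∂μ) * n) - ∫ g, G g⁻¹ ∂μ := by
          push_cast
          ring
      _ ≤ (∫ g, G g ∂mconvN μ n) - ∫ h, G h⁻¹ ∂μ := by gcongr
      _ = ∫ h, ((∫ g, G g ∂mconvN μ n) - G h⁻¹) ∂μ := by
          simp [integral_sub (integrable_const _) hint]
      _ ≤ ∫ h, ∫ g, G (g * h) ∂mconvN μ n ∂μ :=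
          integral_mono ((integrable_const _).sub hint) (integrable_integral_mul hG) hstep

theorem tendsto_integral_log_N2 [d.AtLeastTwo] (μ : Measure (GLd d)) [IsCompactProbability μ] :
    Tendsto (fun n : ℕ => (n : ℝ)⁻¹ * ∫ g, Real.log (N2 g) ∂mconvN μ n) atTop (𝓝 (L12 μ)) := by
  obtain ⟨l, hl⟩ := exists_tendsto_inv_mul_integral_of_subadditive μ continuous_log_N2
    (fun _ => .of_forall fun h g => log_N2_mul_le g h)
    (neg_integral_inv_mul_le_integral_mconvN μ continuous_log_N2 log_N2_mul_le)
  rwa [L12, hl.limUnder_eq]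

/-- The sine of the angle between the lines spanned by two unit vectors. It is the projective
distance, and only a pseudometric on the sphere. -/
def sinAngle (v w : UnitSphere d) : ℝ := √(gramDet (v : Ed d) w)

lemma sinAngle_nonneg (v w : UnitSphere d) : 0 ≤ sinAngle v w := Real.sqrt_nonneg _

lemma sinAngle_sq (v w : UnitSphere d) : sinAngle v w ^ 2 = 1 - inner ℝ (v : Ed d) w ^ 2 := by
  rw [sinAngle, Real.sq_sqrt (gramDet_nonneg _ _), gramDet]
  simp

lemma sinAngle_le_one (v w : UnitSphere d) : sinAngle v w ≤ 1 := by
  rw [← sq_le_one_iff₀ (sinAngle_nonneg v w), sinAngle_sq]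
  linarith [sq_nonneg (inner ℝ (v : Ed d) w)]

@[fun_prop]
lemma continuous_sinAngle {X : Type*} [TopologicalSpace X] {v w : X → UnitSphere d}
    (hv : Continuous v) (hw : Continuous w) : Continuous fun x => sinAngle (v x) (w x) := by
  unfold sinAngle gramDet
  fun_prop

lemma norm_sub_le_or_norm_add_le_sinAngle (v w : UnitSphere d) :
    ‖(v : Ed d) - w‖ ≤ 2 * sinAngle v w ∨ ‖(v : Ed d) + w‖ ≤ 2 * sinAngle v w := by
  have hs : |inner ℝ (v : Ed d) w| ≤ 1 := by
    simpa using abs_real_inner_le_norm (v : Ed d) w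
  rw [abs_le] at hs
  have hnn : 0 ≤ 2 * sinAngle v w := mul_nonneg zero_le_two (sinAngle_nonneg v w)
  rcases le_total 0 (inner ℝ (v : Ed d) w) with h | h
  · refine .inl ((sq_le_sq₀ (norm_nonneg _) hnn).1 ?_)
    rw [norm_sub_sq_real, mul_pow, sinAngle_sq, norm_eq_of_mem_sphere, norm_eq_of_mem_sphere]
    nlinarith
  · refine .inr ((sq_le_sq₀ (norm_nonneg _) hnn).1 ?_)
    rw [norm_add_sq_real, mul_pow, sinAngle_sq, norm_eq_of_mem_sphere, norm_eq_of_mem_sphere]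
    nlinarith

lemma norm_glCLM_sub_norm_glCLM_le (g : GLd d) (v w : UnitSphere d) :
    ‖glCLM g v‖ - ‖glCLM g w‖ ≤ gnorm g * (2 * sinAngle v w) := by
  rcases norm_sub_le_or_norm_add_le_sinAngle v w with h | h
  · calc ‖glCLM g v‖ - ‖glCLM g w‖ ≤ ‖glCLM g (v - w)‖ := by
          rw [map_sub]
          exact norm_sub_norm_le _ _
      _ ≤ gnorm g * (2 * sinAngle v w) := (glCLM g).le_opNorm_of_le h
  · calc ‖glCLM g v‖ - ‖glCLM g w‖ ≤ ‖glCLM g (v + w)‖ := by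
          rw [map_add]
          exact norm_sub_le_norm_add _ _
      _ ≤ gnorm g * (2 * sinAngle v w) := (glCLM g).le_opNorm_of_le h

lemma normCocycle_sub_le {g : GLd d} {K : ℝ} (hK : ∀ u : UnitSphere d, |normCocycle g u| ≤ K)
    (v w : UnitSphere d) :
    normCocycle g v - normCocycle g w ≤ 2 * Real.exp (2 * K) * sinAngle v w := by
  have hexp (u : UnitSphere d) : ‖glCLM g u‖ = Real.exp (normCocycle g u) :=
    (Real.exp_log (norm_glCLM_pos g u)).symm
  have hinv : ‖glCLM g w‖⁻¹ ≤ Real.exp K := by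
    rw [hexp, ← Real.exp_neg, Real.exp_le_exp]
    exact (neg_le_abs _).trans (hK w)
  have hgnorm : gnorm g ≤ Real.exp K :=
    ContinuousLinearMap.opNorm_le_of_unit_norm (Real.exp_pos K).le fun x hx => by
      rw [show ‖glCLM g x‖ = _ from hexp ⟨x, by simpa using hx⟩, Real.exp_le_exp]
      exact (le_abs_self _).trans (hK _)
  have hs := sinAngle_nonneg v w
  have hw := norm_glCLM_pos g w
  calc normCocycle g v - normCocycle g w = Real.log (‖glCLM g v‖ / ‖glCLM g w‖) :=
        (Real.log_div (norm_glCLM_pos g v).ne' hw.ne').symm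
    _ ≤ ‖glCLM g v‖ / ‖glCLM g w‖ - 1 :=
        Real.log_le_sub_one_of_pos (div_pos (norm_glCLM_pos g v) hw)
    _ = (‖glCLM g v‖ - ‖glCLM g w‖) * ‖glCLM g w‖⁻¹ := by field_simp
    _ ≤ Real.exp K * (2 * sinAngle v w) * Real.exp K := by
        gcongr
        exact (norm_glCLM_sub_norm_glCLM_le g v w).trans (by gcongr)
    _ = 2 * Real.exp (2 * K) * sinAngle v w := by
        rw [two_mul K, Real.exp_add]
        ring

theorem exists_ae_abs_normCocycle_sub_le (μ : Measure (GLd d)) [IsCompactProbability μ] {α : ℝ}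
    (hα : α ≤ 1) :
    ∃ C, 0 ≤ C ∧ ∀ᵐ g ∂μ, ∀ v w : UnitSphere d,
      |normCocycle g v - normCocycle g w| ≤ C * sinAngle v w ^ α := by
  obtain ⟨K, -, hK⟩ := exists_ae_abs_normCocycle_le μ
  refine ⟨2 * Real.exp (2 * K), by positivity, hK.mono fun g hg v w => ?_⟩
  have hcomm : sinAngle w v = sinAngle v w := by
    rw [sinAngle, sinAngle, gramDet, gramDet, real_inner_comm, mul_comm]
  calc |normCocycle g v - normCocycle g w| ≤ 2 * Real.exp (2 * K) * sinAngle v w :=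
        abs_sub_le_iff.2 ⟨normCocycle_sub_le hg v w, hcomm ▸ normCocycle_sub_le hg w v⟩
    _ ≤ 2 * Real.exp (2 * K) * sinAngle v w ^ α := by
        gcongr
        rcases (sinAngle_nonneg v w).eq_or_lt with h | h
        · rw [← h]
          exact Real.rpow_nonneg le_rfl α
        · exact Real.self_le_rpow_of_le_one h.le (sinAngle_le_one v w) hα

lemma exp_mul_le_one_add_sq_add {α L x : ℝ} (hα : 0 ≤ α) (hαL : α * L ≤ 1) (hx : |x| ≤ L) :
    Real.exp (α * x) ≤ 1 + (α * L) ^ 2 + α * x := by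
  have hαx : |α * x| ≤ α * L := by
    rw [abs_mul, abs_of_nonneg hα]
    exact mul_le_mul_of_nonneg_left hx hα
  have hexp := (le_abs_self _).trans (Real.abs_exp_sub_one_sub_id_le (hαx.trans hαL))
  have hsq : (α * x) ^ 2 ≤ (α * L) ^ 2 := sq_le_sq' (abs_le.1 hαx).1 (abs_le.1 hαx).2
  linarith

section LogExpansion

variable [d.AtLeastTwo]

/-- The logarithm of the factor by which `g` can expand the sine of the angle between `v` and
`w`. -/
def logExpansion (g : GLd d) (v w : UnitSphere d) : ℝ :=
  Real.log (N2 g) - normCocycle g v - normCocycle g w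

@[fun_prop]
lemma continuous_logExpansion {X : Type*} [TopologicalSpace X] {g : X → GLd d}
    {v w : X → UnitSphere d} (hg : Continuous g) (hv : Continuous v) (hw : Continuous w) :
    Continuous fun x => logExpansion (g x) (v x) (w x) := by
  have := continuous_log_N2.comp hg
  exact (this.sub (by fun_prop)).sub (by fun_prop)

lemma sinAngle_smul_smul_le (g : GLd d) (v w : UnitSphere d) :
    sinAngle (g • v) (g • w) ≤ Real.exp (logExpansion g v w) * sinAngle v w := by
  have hv := norm_glCLM_pos g v
  have hw := norm_glCLM_pos g w
  have hexp : Real.exp (logExpansion g v w) = ‖glCLM g v‖⁻¹ * ‖glCLM g w‖⁻¹ * N2 g := by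
    rw [logExpansion, normCocycle, normCocycle, Real.exp_sub, Real.exp_sub,
      Real.exp_log (N2_pos g), Real.exp_log hv, Real.exp_log hw]
    field_simp
  rw [sinAngle, coe_smul, coe_smul, gramDet_smul_smul, Real.sqrt_mul (sq_nonneg _),
    Real.sqrt_sq (by positivity), hexp, mul_assoc (_ * _)]
  refine mul_le_mul_of_nonneg_left ?_ (by positivity)
  calc √(gramDet (glCLM g v) (glCLM g w)) ≤ √(N2 g ^ 2 * gramDet (v : Ed d) w) :=
        Real.sqrt_le_sqrt (gramDet_glCLM_le g v w)
    _ = N2 g * sinAngle v w := by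
        rw [Real.sqrt_mul (sq_nonneg _), Real.sqrt_sq (N2_nonneg g), sinAngle]

lemma rpow_sinAngle_smul_smul_le {α : ℝ} (hα : 0 ≤ α) (g : GLd d) (v w : UnitSphere d) :
    sinAngle (g • v) (g • w) ^ α ≤ Real.exp (α * logExpansion g v w) * sinAngle v w ^ α := by
  calc sinAngle (g • v) (g • w) ^ α ≤ (Real.exp (logExpansion g v w) * sinAngle v w) ^ α :=
        Real.rpow_le_rpow (sinAngle_nonneg _ _) (sinAngle_smul_smul_le g v w) hα
    _ = Real.exp (α * logExpansion g v w) * sinAngle v w ^ α := by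
        rw [Real.mul_rpow (Real.exp_pos _).le (sinAngle_nonneg _ _), ← Real.exp_mul, mul_comm α]

lemma exists_ae_abs_logExpansion_le (μ : Measure (GLd d)) [IsCompactProbability μ] :
    ∃ L, 1 ≤ L ∧ ∀ᵐ g ∂μ, ∀ v w, |logExpansion g v w| ≤ L := by
  obtain ⟨S, hS, hμ⟩ := IsCompactProbability.compactlySupported (μ := μ)
  obtain ⟨L, hL⟩ := (hS.prod (isCompact_univ (X := UnitSphere d × UnitSphere d)))
    |>.exists_bound_of_continuousOn (f := fun p => logExpansion p.1 p.2.1 p.2.2)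
      (Continuous.continuousOn (by fun_prop))
  have hmem : ∀ᵐ g ∂μ, g ∈ S := hμ
  exact ⟨max 1 L, le_max_left _ _, hmem.mono fun g hg v w =>
    (hL (g, v, w) ⟨hg, trivial⟩).trans (le_max_right _ _)⟩

theorem exists_ae_rpow_sinAngle_smul_smul_le (μ : Measure (GLd d)) [IsCompactProbability μ] {α : ℝ}
    (hα : 0 ≤ α) :
    ∃ M, 0 ≤ M ∧ ∀ᵐ g ∂μ, ∀ v w : UnitSphere d,
      sinAngle (g • v) (g • w) ^ α ≤ M * sinAngle v w ^ α := by
  obtain ⟨L, -, hL⟩ := exists_ae_abs_logExpansion_le μ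
  refine ⟨Real.exp (α * L), (Real.exp_pos _).le, hL.mono fun g hg v w => ?_⟩
  refine (rpow_sinAngle_smul_smul_le hα g v w).trans ?_
  have := Real.rpow_nonneg (sinAngle_nonneg v w) α
  gcongr
  exact (le_abs_self _).trans (hg v w)

variable {μ : Measure (GLd d)} [IsCompactProbability μ]

lemma integral_logExpansion (m : ℕ) (v w : UnitSphere d) :
    ∫ g, logExpansion g v w ∂mconvN μ m =
      (∫ g, Real.log (N2 g) ∂mconvN μ m) - meanCocycle μ m v - meanCocycle μ m w := by
  have hint {f : GLd d → ℝ} (hf : Continuous f) : Integrable f (mconvN μ m) :=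
    integrable_of_continuous _ hf
  simp only [logExpansion, meanCocycle]
  rw [integral_sub (hint (by fun_prop)) (hint (by fun_prop)),
    integral_sub (hint (by fun_prop)) (hint (by fun_prop))]

lemma integral_rpow_sinAngle_smul_smul_le {m : ℕ} {α L : ℝ} (hα : 0 ≤ α) (hαL : α * L ≤ 1)
    (hL : ∀ᵐ g ∂mconvN μ m, ∀ v w, |logExpansion g v w| ≤ L) (v w : UnitSphere d) :
    ∫ g, sinAngle (g • v) (g • w) ^ α ∂mconvN μ m ≤
      (1 + (α * L) ^ 2 + α * ((∫ g, Real.log (N2 g) ∂mconvN μ m) - 2 * minMeanCocycle μ m)) *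
        sinAngle v w ^ α := by
  have hnn := Real.rpow_nonneg (sinAngle_nonneg v w) α
  have hint : Integrable (fun g => logExpansion g v w) (mconvN μ m) :=
    integrable_of_continuous _ (by fun_prop)
  calc ∫ g, sinAngle (g • v) (g • w) ^ α ∂mconvN μ m
      ≤ ∫ g, (1 + (α * L) ^ 2 + α * logExpansion g v w) * sinAngle v w ^ α ∂mconvN μ m := by
        refine integral_mono_ae (integrable_of_continuous _ ?_) (by fun_prop) ?_
        · exact Continuous.rpow_const (by fun_prop) fun _ => .inr hα
        · filter_upwards [hL] with g hg
          exact (rpow_sinAngle_smul_smul_le hα g v w).trans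
            (mul_le_mul_of_nonneg_right (exp_mul_le_one_add_sq_add hα hαL (hg v w)) hnn)
    _ = (1 + (α * L) ^ 2 + α * ∫ g, logExpansion g v w ∂mconvN μ m) * sinAngle v w ^ α := by
        rw [integral_mul_const, integral_add (integrable_const _) (hint.const_mul α),
          integral_const_mul, integral_const, probReal_univ, one_smul]
    _ ≤ _ := by
        have hv := minMeanCocycle_le (μ := μ) m v
        have hw := minMeanCocycle_le (μ := μ) m w
        rw [integral_logExpansion]
        exact mul_le_mul_of_nonneg_right
          (add_le_add_right (mul_le_mul_of_nonneg_left (by linarith) hα) _) hnn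

theorem exists_rpow_sinAngle_contraction {m : ℕ}
    (hm : ∫ g, Real.log (N2 g) ∂mconvN μ m < 2 * minMeanCocycle μ m) :
    ∃ α : ℝ, 0 < α ∧ α ≤ 1 ∧ ∃ ρ, 0 ≤ ρ ∧ ρ < 1 ∧ ∀ v w : UnitSphere d,
      ∫ g, sinAngle (g • v) (g • w) ^ α ∂mconvN μ m ≤ ρ * sinAngle v w ^ α := by
  obtain ⟨L, hL₁, hL⟩ := exists_ae_abs_logExpansion_le (mconvN μ m)
  obtain ⟨κ, hκ⟩ : ∃ κ, κ = 2 * minMeanCocycle μ m - ∫ g, Real.log (N2 g) ∂mconvN μ m := ⟨_, rfl⟩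
  have hκ₀ : 0 < κ := by linarith
  have hL₀ : 0 < L := by linarith
  obtain ⟨α, hα⟩ : ∃ α, α = min (1 / L) (κ / (2 * L ^ 2)) := ⟨_, rfl⟩
  have hα₀ : 0 < α := hα ▸ lt_min (by positivity) (by positivity)
  have hαL : α * L ≤ 1 := (le_div_iff₀ hL₀).1 (hα ▸ min_le_left _ _)
  have hακ : α * (2 * L ^ 2) ≤ κ := (le_div_iff₀ (by positivity)).1 (hα ▸ min_le_right _ _)
  refine ⟨α, hα₀, by nlinarith, max 0 (1 - α * κ / 2), le_max_left _ _, ?_, fun v w => ?_⟩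
  · exact max_lt one_pos (by linarith [mul_pos hα₀ hκ₀])
  · refine (integral_rpow_sinAngle_smul_smul_le hα₀.le hαL hL v w).trans
      (mul_le_mul_of_nonneg_right (le_max_of_le_right ?_)
        (Real.rpow_nonneg (sinAngle_nonneg v w) α))
    linear_combination (α / 2) * hακ + α * hκ

end LogExpansion

/-! ### Perturbation of contractions -/

lemma exists_eventually_norm_pow_le {X R : Type*} [TopologicalSpace X] [SeminormedRing R]
    {T : X → R} {x₀ : X} (hT : ContinuousAt T x₀) {m : ℕ} (hm : m ≠ 0) (h : ‖T x₀ ^ m‖ < 1) :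
    ∃ θ : ℝ, 0 ≤ θ ∧ θ < 1 ∧ ∃ B, ∀ᶠ x in 𝓝 x₀, ∀ k, ‖T x ^ k‖ ≤ B * θ ^ k := by
  have hT' (k : ℕ) : ContinuousAt (fun x => ‖T x ^ k‖) x₀ := (hT.pow k).norm
  obtain ⟨θ, hθm, hθ₀, hθ₁⟩ : ∃ θ : ℝ, ‖T x₀ ^ m‖ < θ ^ m ∧ 0 < θ ∧ θ < 1 :=
    (((((continuous_pow m).tendsto (1 : ℝ)).mono_left nhdsWithin_le_nhds).eventually
      (lt_mem_nhds (by simpa using h))).and (Ioo_mem_nhdsLT one_pos)).exists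
  have hsmall : ∀ᶠ x in 𝓝 x₀, ∀ j ∈ Finset.range m, ‖T x ^ j‖ ≤ ‖T x₀ ^ j‖ + 1 :=
    (Finset.eventually_all _).2 fun j _ => (hT' j).eventually_le_const (lt_add_one _)
  refine ⟨θ, hθ₀.le, hθ₁, ∑ j ∈ Finset.range m, (‖T x₀ ^ j‖ + 1) / θ ^ j, ?_⟩
  filter_upwards [hsmall, (hT' m).eventually_lt_const hθm] with x hx hxm k
  induction k using Nat.strong_induction_on with
  | h k ih =>
    rcases lt_or_ge k m with hk | hk
    · rw [← div_le_iff₀ (by positivity)]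
      exact (div_le_div_of_nonneg_right (hx k (Finset.mem_range.2 hk)) (by positivity)).trans
        (Finset.single_le_sum (f := fun j => (‖T x₀ ^ j‖ + 1) / θ ^ j)
          (fun j _ => by positivity) (Finset.mem_range.2 hk))
    · obtain ⟨j, rfl⟩ := Nat.exists_eq_add_of_le hk
      calc ‖T x ^ (m + j)‖ ≤ ‖T x ^ m‖ * ‖T x ^ j‖ := by rw [pow_add]; exact norm_mul_le _ _
        _ ≤ θ ^ m * (_ * θ ^ j) :=
          mul_le_mul hxm.le (ih j (by lia)) (norm_nonneg _) (by positivity)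
        _ = _ * θ ^ (m + j) := by rw [pow_add]; ring

theorem exists_differentiableOn_tsum_pow {F : Type*} [NormedAddCommGroup F] [NormedSpace ℂ F]
    {T : ℂ → F →L[ℂ] F} {D : ℂ → F →L[ℂ] ℂ} {φ : ℂ → F} (hT : Differentiable ℂ T)
    (hD : Differentiable ℂ D) (hφ : Differentiable ℂ φ) {m : ℕ} (hm : m ≠ 0) (h : ‖T 0 ^ m‖ < 1) :
    ∃ r > 0, ∃ θ : ℝ, 0 ≤ θ ∧ θ < 1 ∧ ∃ B,
      DifferentiableOn ℂ (fun t => ∑' k, D t ((T t ^ k) (φ t))) (Metric.ball 0 r) ∧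
      ∀ t ∈ Metric.ball (0 : ℂ) r, ∀ k,
        ‖(T t ^ k) (φ t)‖ ≤ B * θ ^ k ∧ ‖D t ((T t ^ k) (φ t))‖ ≤ B * θ ^ k := by
  obtain ⟨θ, hθ₀, hθ₁, B, hB⟩ := exists_eventually_norm_pow_le hT.continuous.continuousAt hm h
  obtain ⟨r, hr, hball⟩ := Metric.eventually_nhds_iff_ball.1 <|
    (hB.and (hφ.continuous.norm.continuousAt.eventually_le_const (lt_add_one _))).and
      (hD.continuous.norm.continuousAt.eventually_le_const (lt_add_one _))
  have hbound : ∀ t ∈ Metric.ball (0 : ℂ) r, ∀ k,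
      ‖(T t ^ k) (φ t)‖ ≤ B * (‖φ 0‖ + 1) * θ ^ k ∧
        ‖D t ((T t ^ k) (φ t))‖ ≤ (‖D 0‖ + 1) * (B * (‖φ 0‖ + 1) * θ ^ k) := fun t ht k => by
    obtain ⟨⟨hTt, hφt⟩, hDt⟩ := hball t ht
    have hBk : 0 ≤ B * θ ^ k := (norm_nonneg _).trans (hTt k)
    have hTφ : ‖(T t ^ k) (φ t)‖ ≤ B * (‖φ 0‖ + 1) * θ ^ k :=
      (((T t ^ k).le_opNorm _).trans (mul_le_mul (hTt k) hφt (norm_nonneg _) hBk)).trans_eq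
        (by ring)
    exact ⟨hTφ, ((D t).le_opNorm _).trans
      (mul_le_mul hDt hTφ (norm_nonneg _) (by positivity))⟩
  have hB₀ : 0 ≤ B * (‖φ 0‖ + 1) := by
    simpa using (norm_nonneg _).trans (hbound 0 (Metric.mem_ball_self hr) 0).1
  refine ⟨r, hr, θ, hθ₀, hθ₁, (‖D 0‖ + 1) * (B * (‖φ 0‖ + 1)), ?_, fun t ht k => ?_⟩
  · exact Complex.differentiableOn_tsum_of_summable_norm
      (((summable_geometric_of_lt_one hθ₀ hθ₁).mul_left _).mul_left _)
      (fun k => (hD.clm_apply ((hT.pow k).clm_apply hφ)).differentiableOn) Metric.isOpen_ball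
      fun k t ht => (hbound t ht k).2
  · rw [mul_assoc]
    refine ⟨(hbound t ht k).1.trans (le_mul_of_one_le_left (by positivity) ?_), (hbound t ht k).2⟩
    linarith [norm_nonneg (D 0)]

/-! ### Hölder functions -/

/-- The continuous functions on `X` that vanish at `x₀` and are Lipschitz for the gauge `δ`. -/
def gaugeLipSubmodule {X : Type*} [TopologicalSpace X] (δ : X → X → ℝ) (x₀ : X) :
    Submodule ℂ C(X, ℂ) where
  carrier := {f | f x₀ = 0 ∧ ∃ C, ∀ x y, ‖f x - f y‖ ≤ C * δ x y}
  add_mem' := by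
    rintro f g ⟨hf₀, C, hf⟩ ⟨hg₀, C', hg⟩
    refine ⟨by simp [hf₀, hg₀], C + C', fun x y => ?_⟩
    rw [ContinuousMap.add_apply, ContinuousMap.add_apply, add_sub_add_comm, add_mul]
    exact norm_add_le_of_le (hf x y) (hg x y)
  zero_mem' := ⟨rfl, 0, by simp⟩
  smul_mem' := by
    rintro c f ⟨hf₀, C, hf⟩
    refine ⟨by simp [hf₀], ‖c‖ * C, fun x y => ?_⟩
    rw [ContinuousMap.smul_apply, ContinuousMap.smul_apply, ← smul_sub, norm_smul, mul_assoc]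
    exact mul_le_mul_of_nonneg_left (hf x y) (norm_nonneg c)

/-- The space `gaugeLipSubmodule δ x₀`, normed by the best Lipschitz constant instead of the
supremum. -/
def GaugeLip {X : Type*} [TopologicalSpace X] (δ : X → X → ℝ) (x₀ : X) : Type _ :=
  gaugeLipSubmodule δ x₀

namespace GaugeLip

variable {X : Type*} [TopologicalSpace X] {δ : X → X → ℝ} {x₀ : X}

instance : AddCommGroup (GaugeLip δ x₀) := inferInstanceAs (AddCommGroup (gaugeLipSubmodule δ x₀))

instance : Module ℂ (GaugeLip δ x₀) := inferInstanceAs (Module ℂ (gaugeLipSubmodule δ x₀))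

instance : FunLike (GaugeLip δ x₀) X ℂ where
  coe f := f.1
  coe_injective _ _ h := Subtype.ext (DFunLike.coe_injective h)

@[ext] lemma ext {f g : GaugeLip δ x₀} (h : ∀ x, f x = g x) : f = g := DFunLike.ext f g h

instance : ContinuousMapClass (GaugeLip δ x₀) X ℂ := ⟨fun f => f.1.continuous⟩

@[simp] lemma add_apply (f g : GaugeLip δ x₀) (x : X) : (f + g) x = f x + g x := rfl

@[simp] lemma smul_apply (c : ℂ) (f : GaugeLip δ x₀) (x : X) : (c • f) x = c * f x := rfl

lemma apply_base (f : GaugeLip δ x₀) : f x₀ = 0 := f.2.1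

/-- The difference quotients `(f x - f y) / δ x y`, whose supremum is the norm of `f`. -/
def slope : GaugeLip δ x₀ →ₗ[ℂ] lp (fun _ : X × X => ℂ) ⊤ where
  toFun f := ⟨fun p => (f p.1 - f p.2) / δ p.1 p.2, by
    obtain ⟨C, hC⟩ := f.2.2
    refine memℓp_infty ⟨|C|, ?_⟩
    rintro _ ⟨p, rfl⟩
    simp only [norm_div, Complex.norm_real]
    exact div_le_of_le_mul₀ (norm_nonneg _) (abs_nonneg C)
      ((hC p.1 p.2).trans ((le_abs_self _).trans_eq (abs_mul _ _)))⟩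
  map_add' f g := by
    ext p
    simp only [add_apply, add_sub_add_comm, add_div]
    rfl
  map_smul' c f := by
    ext p
    simp only [smul_apply, ← mul_sub, mul_div_assoc]
    rfl

lemma slope_apply (f : GaugeLip δ x₀) (p : X × X) :
    slope f p = (f p.1 - f p.2) / δ p.1 p.2 := rfl

lemma apply_eq_apply {x y : X} (h : δ x y = 0) (f : GaugeLip δ x₀) : f x = f y := by
  obtain ⟨C, hC⟩ := f.2.2
  have hxy := hC x y
  rw [h, mul_zero, norm_le_zero_iff, sub_eq_zero] at hxy
  exact hxy

lemma slope_injective : Function.Injective (slope : GaugeLip δ x₀ →ₗ[ℂ] _) := by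
  refine (injective_iff_map_eq_zero _).2 fun f hf => ext fun x => ?_
  have hx : slope f (x, x₀) = 0 := by rw [hf]; rfl
  rw [slope_apply, div_eq_zero_iff, sub_eq_zero, Complex.ofReal_eq_zero] at hx
  exact (hx.elim id fun h => apply_eq_apply h f).trans (apply_base f)

instance : NormedAddCommGroup (GaugeLip δ x₀) :=
  .induced _ _ slope slope_injective

instance : NormedSpace ℂ (GaugeLip δ x₀) := .induced ℂ _ _ slope

lemma norm_apply_sub_le (f : GaugeLip δ x₀) {x y : X} (h : 0 ≤ δ x y) :
    ‖f x - f y‖ ≤ ‖f‖ * δ x y := by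
  rcases h.eq_or_lt with h | h
  · simp [apply_eq_apply h.symm f, ← h]
  · have hs := lp.norm_apply_le_norm ENNReal.top_ne_zero (slope f) (x, y)
    rwa [slope_apply, norm_div, Complex.norm_real, Real.norm_of_nonneg h.le, div_le_iff₀ h] at hs

lemma norm_le {f : GaugeLip δ x₀} {C : ℝ} (hC : 0 ≤ C) (h : ∀ x y, ‖f x - f y‖ ≤ C * δ x y) :
    ‖f‖ ≤ C := by
  refine lp.norm_le_of_forall_le (f := slope f) hC fun p => ?_
  rw [slope_apply, norm_div, Complex.norm_real]
  exact div_le_of_le_mul₀ (norm_nonneg _) hC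
    ((h _ _).trans (mul_le_mul_of_nonneg_left (Real.le_norm_self _) hC))

/-- The function `f - f x₀`, for a Lipschitz function `f`. -/
def recenter (f : C(X, ℂ)) (h : ∃ C, ∀ x y, ‖f x - f y‖ ≤ C * δ x y) : GaugeLip δ x₀ :=
  ⟨f - .const X (f x₀), by simp, by simpa using h⟩

@[simp] lemma recenter_apply (f : C(X, ℂ)) (h : ∃ C, ∀ x y, ‖f x - f y‖ ≤ C * δ x y) (x : X) :
    (recenter f h : GaugeLip δ x₀) x = f x - f x₀ := rfl

end GaugeLip

/-! ### The transfer operator -/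

/-- The `α`-Hölder functions on the projective space, vanishing at `v₀` and normed by the best
Hölder constant; the sine of the angle serves as the distance. -/
abbrev HolderFun (α : unitInterval) (v₀ : UnitSphere d) : Type :=
  GaugeLip (fun v w : UnitSphere d => sinAngle v w ^ (α : ℝ)) v₀

namespace HolderFun

variable {α : unitInterval} {v₀ : UnitSphere d} (μ : Measure (GLd d)) [IsCompactProbability μ]

lemma norm_apply_sub_le (f : HolderFun α v₀) (v w : UnitSphere d) :
    ‖f v - f w‖ ≤ ‖f‖ * sinAngle v w ^ (α : ℝ) :=
  GaugeLip.norm_apply_sub_le f (Real.rpow_nonneg (sinAngle_nonneg v w) _)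

lemma norm_apply_le (f : HolderFun α v₀) (v : UnitSphere d) : ‖f v‖ ≤ ‖f‖ := by
  simpa [f.apply_base] using (norm_apply_sub_le f v v₀).trans (mul_le_of_le_one_right
    (norm_nonneg f) (Real.rpow_le_one (sinAngle_nonneg v v₀) (sinAngle_le_one v v₀) α.2.1))

lemma integrable_smul (f : HolderFun α v₀) (v : UnitSphere d) :
    Integrable (fun g => f (g • v)) μ :=
  integrable_of_continuous μ (by fun_prop)

lemma norm_integral_smul_sub_le {R : ℝ}
    (hR : ∀ v w : UnitSphere d,
      ∫ g, sinAngle (g • v) (g • w) ^ (α : ℝ) ∂μ ≤ R * sinAngle v w ^ (α : ℝ))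
    (f : HolderFun α v₀) (v w : UnitSphere d) :
    ‖∫ g, f (g • v) ∂μ - ∫ g, f (g • w) ∂μ‖ ≤ R * ‖f‖ * sinAngle v w ^ (α : ℝ) := by
  rw [← integral_sub (f.integrable_smul μ v) (f.integrable_smul μ w)]
  calc ‖∫ g, f (g • v) - f (g • w) ∂μ‖
      ≤ ∫ g, ‖f‖ * sinAngle (g • v) (g • w) ^ (α : ℝ) ∂μ :=
        norm_integral_le_of_norm_le (integrable_of_continuous μ (by have := α.2.1; fun_prop))
          (Eventually.of_forall fun g => norm_apply_sub_le f _ _)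
    _ = ‖f‖ * ∫ g, sinAngle (g • v) (g • w) ^ (α : ℝ) ∂μ := integral_const_mul _ _
    _ ≤ ‖f‖ * (R * sinAngle v w ^ (α : ℝ)) := mul_le_mul_of_nonneg_left (hR v w) (norm_nonneg f)
    _ = R * ‖f‖ * sinAngle v w ^ (α : ℝ) := by ring

/-- The functional `f ↦ ∫ f (g v₀) dμ(g)`, the amount by which `transferOp μ` recenters. -/
def drift : HolderFun α v₀ →L[ℂ] ℂ :=
  LinearMap.mkContinuous
    { toFun f := ∫ g, f (g • v₀) ∂μ
      map_add' f g := integral_add (f.integrable_smul μ v₀) (g.integrable_smul μ v₀)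
      map_smul' c f := integral_const_mul c _ }
    1 fun f => (norm_integral_le_of_norm_le_const (μ := μ)
      (Eventually.of_forall fun g => norm_apply_le f (g • v₀))).trans_eq (by simp)

lemma drift_apply (f : HolderFun α v₀) : drift μ f = ∫ g, f (g • v₀) ∂μ := rfl

variable [d.AtLeastTwo]

lemma exists_integral_rpow_sinAngle_le (α : unitInterval) :
    ∃ R : ℝ, 0 ≤ R ∧ ∀ v w : UnitSphere d,
      ∫ g, sinAngle (g • v) (g • w) ^ (α : ℝ) ∂μ ≤ R * sinAngle v w ^ (α : ℝ) := by
  obtain ⟨R, hR₀, hR⟩ := exists_ae_rpow_sinAngle_smul_smul_le μ α.2.1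
  refine ⟨R, hR₀, fun v w => ?_⟩
  simpa using integral_mono_ae (integrable_of_continuous μ (by have := α.2.1; fun_prop))
    (integrable_const (R * sinAngle v w ^ (α : ℝ))) (hR.mono fun g hg => hg v w)

/-- The transfer operator `f ↦ ∫ f (g ·) dμ(g)`, recentered so as to preserve functions that vanish
at `v₀`. -/
def transferOp : HolderFun α v₀ →L[ℂ] HolderFun α v₀ :=
  LinearMap.mkContinuousOfExistsBound
    { toFun f := GaugeLip.recenter
        ⟨fun v => ∫ g, f (g • v) ∂μ, continuous_integral_of_isCompactProbability
          (by simp only [Function.uncurry_def]; fun_prop)⟩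
        (let ⟨R, _, hR⟩ := exists_integral_rpow_sinAngle_le μ α
        ⟨R * ‖f‖, norm_integral_smul_sub_le μ hR f⟩)
      map_add' f g := by
        ext v
        simp [integral_add (f.integrable_smul μ _) (g.integrable_smul μ _), add_sub_add_comm]
      map_smul' c f := by
        ext v
        simp [integral_const_mul, mul_sub] }
    (by
      obtain ⟨R, hR₀, hR⟩ := exists_integral_rpow_sinAngle_le μ α
      exact ⟨R, fun f => GaugeLip.norm_le (by positivity)
        (by simpa using norm_integral_smul_sub_le μ hR f)⟩)

lemma transferOp_apply (f : HolderFun α v₀) (v : UnitSphere d) :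
    transferOp μ f v = ∫ g, f (g • v) ∂μ - ∫ g, f (g • v₀) ∂μ := by
  rfl

lemma markovIter_one_eq (f : HolderFun α v₀) (v : UnitSphere d) :
    markovIter μ 1 f v = drift μ f + transferOp μ f v := by
  rw [markovIter_one, transferOp_apply, drift_apply, add_sub_cancel]

lemma markovIter_eq_sum (n : ℕ) (f : HolderFun α v₀) (v : UnitSphere d) :
    markovIter μ n f v =
      ∑ k ∈ Finset.range n, drift μ ((transferOp μ ^ k) f) + (transferOp μ ^ n) f v := by
  induction n generalizing f with
  | zero => simp [markovIter, mconvN_zero]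
  | succ n ih =>
    have hstep : markovIter μ 1 f = fun v => drift μ f + transferOp μ f v :=
      funext (markovIter_one_eq μ f)
    rw [markovIter_succ (by fun_prop), hstep, Finset.sum_range_succ']
    simp only [pow_succ, mul_apply_eq_comp, pow_zero, one_apply_eq_self]
    rw [add_right_comm, ← ih, add_comm]
    simp only [markovIter]
    rw [integral_add (integrable_const _) (integrable_smul _ _ _)]
    simp

lemma norm_transferOp_pow_le {n : ℕ} {R : ℝ} (hR₀ : 0 ≤ R)
    (hR : ∀ v w : UnitSphere d,
      ∫ g, sinAngle (g • v) (g • w) ^ (α : ℝ) ∂mconvN μ n ≤ R * sinAngle v w ^ (α : ℝ)) :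
    ‖(transferOp μ : HolderFun α v₀ →L[ℂ] _) ^ n‖ ≤ R := by
  refine ContinuousLinearMap.opNorm_le_bound _ hR₀ fun f =>
    GaugeLip.norm_le (by positivity) fun v w => ?_
  have hdiff : (transferOp μ ^ n) f v - (transferOp μ ^ n) f w =
      markovIter μ n f v - markovIter μ n f w := by
    rw [markovIter_eq_sum, markovIter_eq_sum, add_sub_add_left_eq_sub]
  rw [hdiff]
  exact norm_integral_smul_sub_le (mconvN μ n) hR f v w

end HolderFun

/-! ### The exponent as a sum over the orbit of the transfer operator -/

section L1Formula

variable {μ : Measure (GLd d)} [IsCompactProbability μ]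

lemma sqDev_le_mul_of_abs_meanCocycle_sub_le {l C K : ℝ} (hK₀ : 0 ≤ K)
    (hK : ∀ᵐ h ∂μ, ∀ v : UnitSphere d, |normCocycle h v - l| ≤ K)
    (hC : ∀ n v, |meanCocycle μ n v - n * l| ≤ C) (n : ℕ) (v : UnitSphere d) :
    sqDev μ l n v ≤ (K ^ 2 + 2 * K * C) * n := by
  induction n generalizing v with
  | zero => simp [sqDev, mconvN_zero, normCocycle_one]
  | succ n ih =>
    calc sqDev μ l (n + 1) v
        ≤ ∫ h, (K ^ 2 + 2 * K * |meanCocycle μ n (h • v) - n * l| + sqDev μ l n (h • v)) ∂μ :=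
          sqDev_succ_le hK n v
      _ ≤ ∫ _, (K ^ 2 + 2 * K * C) * (n + 1) ∂μ :=
          integral_mono (integrable_of_continuous μ (by fun_prop)) (integrable_const _) fun h => by
            nlinarith [ih (h • v), mul_le_mul_of_nonneg_left (hC n (h • v)) hK₀]
      _ = (K ^ 2 + 2 * K * C) * (n + 1 : ℕ) := by simp

lemma L1_le_of_abs_meanCocycle_sub_le [NeZero d] {l C : ℝ}
    (hC : ∀ n (v : UnitSphere d), |meanCocycle μ n v - n * l| ≤ C) : L1 μ ≤ l := by
  obtain ⟨K, hK₀, hK⟩ := exists_ae_abs_normCocycle_le μ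
  have hKl : ∀ᵐ h ∂μ, ∀ v : UnitSphere d, |normCocycle h v - l| ≤ K + |l| :=
    hK.mono fun h hh v => (abs_sub _ _).trans (add_le_add_left (hh v) _)
  have hspan : Submodule.span ℝ ((↑) '' (Set.univ : Set (UnitSphere d)) : Set (Ed d)) = ⊤ := by
    rw [Set.image_univ, span_range_coe]
  refine growth_le_of_tendsto_sqDev (μ := μ) Set.univ (hspan ▸ top_ne_bot) (ns := id) tendsto_id
    (fun v _ => ?_) ?_
  · refine squeeze_zero (fun n => div_nonneg (sqDev_nonneg _ _ _ _) (sq_nonneg _)) (fun n => ?_)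
      (tendsto_const_div_atTop_nhds_zero_nat ((K + |l|) ^ 2 + 2 * (K + |l|) * C))
    calc sqDev μ l n v / (n : ℝ) ^ 2 ≤ ((K + |l|) ^ 2 + 2 * (K + |l|) * C) * n / (n : ℝ) ^ 2 :=
          div_le_div_of_nonneg_right
            (sqDev_le_mul_of_abs_meanCocycle_sub_le (by positivity) hKl hC n v) (sq_nonneg _)
      _ = ((K + |l|) ^ 2 + 2 * (K + |l|) * C) / n := by
          rw [sq (n : ℝ), mul_div_assoc, div_self_mul_self', div_eq_mul_inv]
  · rw [hspan, ← L1rest_top]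
    exact tendsto_integral_log_restrNorm top_ne_bot (.of_forall map_glCLM_top)

lemma le_L1_of_abs_meanCocycle_sub_le [NeZero d] {l C : ℝ}
    (hC : ∀ n (v : UnitSphere d), |meanCocycle μ n v - n * l| ≤ C) : l ≤ L1 μ := by
  obtain ⟨v⟩ : Nonempty (UnitSphere d) := inferInstance
  have hlim : Tendsto (fun n : ℕ => l - C / n) atTop (𝓝 l) := by
    simpa using tendsto_const_nhds.sub (tendsto_const_div_atTop_nhds_zero_nat C)
  rw [← L1rest_top]
  refine le_of_tendsto_of_tendsto hlim
    (tendsto_integral_log_restrNorm top_ne_bot (.of_forall map_glCLM_top)) ?_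
  filter_upwards [eventually_gt_atTop 0] with n hn
  have hmean := meanCocycle_le_integral_log_restrNorm (μ := μ) top_ne_bot
    (Submodule.mem_top (x := (v : Ed d))) n
  rw [inv_mul_eq_div, le_div_iff₀ (by positivity), sub_mul, div_mul_cancel₀ _ (by positivity)]
  linarith [(abs_le.1 (hC n v)).1]

theorem L1_eq_of_abs_markovIter_sub_le [NeZero d] {l B θ : ℝ} (hθ₀ : 0 ≤ θ) (hθ₁ : θ < 1)
    (h : ∀ k (v : UnitSphere d), |markovIter μ k (meanCocycle μ 1) v - l| ≤ B * θ ^ k) :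
    L1 μ = l := by
  have hsum : Summable fun k => B * θ ^ k := (summable_geometric_of_lt_one hθ₀ hθ₁).mul_left B
  have hC (n : ℕ) (v : UnitSphere d) : |meanCocycle μ n v - n * l| ≤ ∑' k, B * θ ^ k :=
    calc |meanCocycle μ n v - n * l|
        = |∑ k ∈ Finset.range n, (markovIter μ k (meanCocycle μ 1) v - l)| := by
          simp [Finset.sum_sub_distrib, sum_markovIter_meanCocycle_one]
      _ ≤ ∑ k ∈ Finset.range n, B * θ ^ k :=
          (Finset.abs_sum_le_sum_abs _ _).trans (Finset.sum_le_sum fun k _ => h k v)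
      _ ≤ ∑' k, B * θ ^ k := hsum.sum_le_tsum _ fun k _ => (abs_nonneg _).trans (h k v)
  exact le_antisymm (L1_le_of_abs_meanCocycle_sub_le hC) (le_L1_of_abs_meanCocycle_sub_le hC)

end L1Formula

namespace HolderFun

variable (μ : Measure (GLd d)) [IsCompactProbability μ]

/-- The mean one-step growth `v ↦ ∫ log ‖g v‖ dμ(g)`, recentered so as to vanish at `v₀`. -/
def growth (α : unitInterval) (v₀ : UnitSphere d) : HolderFun α v₀ :=
  GaugeLip.recenter ⟨fun v => (meanCocycle μ 1 v : ℂ), by fun_prop⟩ (by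
    obtain ⟨C, _, hC⟩ := exists_ae_abs_normCocycle_sub_le μ α.2.2
    refine ⟨C, fun v w => ?_⟩
    rw [ContinuousMap.coe_mk, ← Complex.ofReal_sub, Complex.norm_real, meanCocycle_one,
      meanCocycle_one, ← integral_sub (integrable_of_continuous μ (by fun_prop))
        (integrable_of_continuous μ (by fun_prop))]
    simpa using norm_integral_le_of_norm_le_const (μ := μ)
      (f := fun g => normCocycle g v - normCocycle g w) (hC.mono fun g hg => hg v w))

variable {α : unitInterval} {v₀ : UnitSphere d}

lemma growth_apply (v : UnitSphere d) :
    growth μ α v₀ v = (meanCocycle μ 1 v - meanCocycle μ 1 v₀ : ℝ) :=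
  (Complex.ofReal_sub _ _).symm

lemma markovIter_meanCocycle_one (k : ℕ) (v : UnitSphere d) :
    markovIter μ k (meanCocycle μ 1) v =
      meanCocycle μ 1 v₀ + (markovIter μ k (growth μ α v₀) v).re := by
  simp only [markovIter, growth_apply]
  rw [integral_complex_ofReal, Complex.ofReal_re,
    integral_sub (integrable_of_continuous _ (by fun_prop)) (integrable_const _)]
  simp

theorem L1_eq_add_re_tsum_drift [d.AtLeastTwo] {B θ : ℝ} (hθ₀ : 0 ≤ θ) (hθ₁ : θ < 1)
    (h : ∀ k, ‖(transferOp μ ^ k) (growth μ α v₀)‖ ≤ B * θ ^ k ∧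
      ‖drift μ ((transferOp μ ^ k) (growth μ α v₀))‖ ≤ B * θ ^ k) :
    L1 μ = meanCocycle μ 1 v₀ + (∑' k, drift μ ((transferOp μ ^ k) (growth μ α v₀))).re := by
  have hsum : Summable fun k => drift μ ((transferOp μ ^ k) (growth μ α v₀)) :=
    .of_norm_bounded ((summable_geometric_of_lt_one hθ₀ hθ₁).mul_left B) fun k => (h k).2
  refine L1_eq_of_abs_markovIter_sub_le (B := B / (1 - θ) + B) hθ₀ hθ₁ fun k v => ?_
  rw [markovIter_meanCocycle_one μ (α := α) (v₀ := v₀), add_sub_add_left_eq_sub, ← Complex.sub_re,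
    markovIter_eq_sum, add_sub_right_comm]
  calc _ ≤ _ := Complex.abs_re_le_norm _
    _ ≤ B * θ ^ k / (1 - θ) + B * θ ^ k :=
        norm_add_le_of_le
          (norm_sub_le_of_geometric_bound_of_hasSum hθ₁ (fun k => (h k).2) hsum.hasSum k)
          ((norm_apply_le _ v).trans (h k).1)
    _ = (B / (1 - θ) + B) * θ ^ k := by ring

theorem exists_norm_transferOp_pow_lt_one [d.AtLeastTwo] (hμ : QuasiIrreducible μ)
    (hgap : L2 μ < L1 μ) (v₀ : UnitSphere d) :
    ∃ α : unitInterval, ∃ m ≠ 0, ‖(transferOp μ : HolderFun α v₀ →L[ℂ] _) ^ m‖ < 1 := by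
  obtain ⟨β, hβ, hmin⟩ := hμ.exists_L1_le_tendsto_minMeanCocycle_div
  have hlt : L12 μ < 2 * β := by
    rw [L2] at hgap
    linarith
  obtain ⟨m, hlog, hm⟩ := (((tendsto_integral_log_N2 μ).eventually_lt (hmin.const_mul 2)
    hlt).and (eventually_gt_atTop 0)).exists
  rw [inv_mul_eq_div, ← mul_div_assoc, div_lt_div_iff_of_pos_right (by positivity)] at hlog
  obtain ⟨α, hα₀, hα₁, ρ, hρ₀, hρ₁, hρ⟩ := exists_rpow_sinAngle_contraction hlog
  exact ⟨⟨α, hα₀.le, hα₁⟩, m, hm.ne', (norm_transferOp_pow_le μ hρ₀ hρ).trans_lt hρ₁⟩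

end HolderFun

/-! ### Mixtures -/

theorem exists_hasSum_re_of_analyticAt {f : ℂ → ℂ} (hf : AnalyticAt ℂ f 0) :
    ∃ a : ℕ → ℝ, ∀ᶠ ε in 𝓝[>] (0 : ℝ), (Summable fun k => |a k| * ε ^ k) ∧
      ∀ t : ℝ, |t| < ε → HasSum (fun k => a k * t ^ k) (f t).re := by
  obtain ⟨p, r, hp⟩ := hf
  obtain ⟨R, hR₀, hRr⟩ := ENNReal.lt_iff_exists_nnreal_btwn.1 hp.r_pos
  refine ⟨fun k => (p.coeff k).re, ?_⟩
  filter_upwards [Ioo_mem_nhdsGT (NNReal.coe_pos.2 (ENNReal.coe_pos.1 hR₀))] with ε ⟨hε₀, hεR⟩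
  refine ⟨?_, fun t ht => ?_⟩
  · refine .of_nonneg_of_le (fun k => by positivity) (fun k => ?_)
      (p.summable_norm_mul_pow (hRr.trans_le hp.r_le))
    gcongr
    exact (Complex.abs_re_le_norm _).trans_eq p.norm_apply_eq_norm_coef.symm
  · have ht : (t : ℂ) ∈ Metric.eball (0 : ℂ) r := by
      refine Metric.eball_subset_eball hRr.le ?_
      simpa using ht.trans hεR
    simpa [FormalMultilinearSeries.apply_eq_pow_smul_coeff, ← Complex.ofReal_pow, mul_comm]
      using Complex.hasSum_re (hp.hasSum ht)

/-- The mixture `(1 - t) μ₀ + t μ₁`, meant for `0 ≤ t ≤ 1`. -/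
def bernoulliMix {Ω : Type*} [MeasurableSpace Ω] (μ₀ μ₁ : Measure Ω) (t : ℝ) : Measure Ω :=
  Real.toNNReal (1 - t) • μ₀ + Real.toNNReal t • μ₁

lemma integral_bernoulliMix {Ω E : Type*} [MeasurableSpace Ω] [NormedAddCommGroup E]
    [NormedSpace ℝ E] {μ₀ μ₁ : Measure Ω} {f : Ω → E} (h₀ : Integrable f μ₀) (h₁ : Integrable f μ₁)
    (t : unitInterval) :
    ∫ x, f x ∂bernoulliMix μ₀ μ₁ t = (1 - t : ℝ) • ∫ x, f x ∂μ₀ + (t : ℝ) • ∫ x, f x ∂μ₁ := by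
  rw [bernoulliMix, integral_add_measure h₀.smul_measure_nnreal h₁.smul_measure_nnreal,
    integral_smul_nnreal_measure, integral_smul_nnreal_measure, NNReal.smul_def, NNReal.smul_def,
    Real.coe_toNNReal _ (sub_nonneg.2 t.2.2), Real.coe_toNNReal _ t.2.1]

section Mixtures

variable (μ₀ μ₁ : Measure (GLd d)) [IsCompactProbability μ₀] [IsCompactProbability μ₁]

instance (t : unitInterval) : IsCompactProbability (bernoulliMix μ₀ μ₁ t) where
  measure_univ := by
    have h : (1 - t : ℝ).toNNReal + (t : ℝ).toNNReal = 1 := by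
      rw [Real.toNNReal_add_toNNReal (sub_nonneg.2 t.2.2) t.2.1, sub_add_cancel, Real.toNNReal_one]
    rw [bernoulliMix, Measure.add_apply, Measure.smul_apply, Measure.smul_apply, measure_univ,
      measure_univ, ENNReal.smul_def, ENNReal.smul_def, smul_eq_mul, smul_eq_mul, mul_one, mul_one,
      ← ENNReal.coe_add, h, ENNReal.coe_one]
  compactlySupported := by
    obtain ⟨K₀, hK₀, h₀⟩ := IsCompactProbability.compactlySupported (μ := μ₀)
    obtain ⟨K₁, hK₁, h₁⟩ := IsCompactProbability.compactlySupported (μ := μ₁)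
    refine ⟨K₀ ∪ K₁, hK₀.union hK₁, ?_⟩
    simp [bernoulliMix, measure_mono_null Set.inter_subset_left h₀,
      measure_mono_null Set.inter_subset_right h₁]

lemma meanCocycle_one_bernoulliMix (t : unitInterval) (v : UnitSphere d) :
    meanCocycle (bernoulliMix μ₀ μ₁ t) 1 v =
      (1 - t) * meanCocycle μ₀ 1 v + t * meanCocycle μ₁ 1 v := by
  simp only [meanCocycle_one]
  exact integral_bernoulliMix (integrable_of_continuous _ (by fun_prop))
    (integrable_of_continuous _ (by fun_prop)) t

namespace HolderFun

variable {α : unitInterval} {v₀ : UnitSphere d}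

lemma integral_smul_bernoulliMix (t : unitInterval) (f : HolderFun α v₀) (v : UnitSphere d) :
    ∫ g, f (g • v) ∂bernoulliMix μ₀ μ₁ t =
      (1 - (t : ℂ)) * ∫ g, f (g • v) ∂μ₀ + t * ∫ g, f (g • v) ∂μ₁ := by
  simp [integral_bernoulliMix (f.integrable_smul μ₀ v) (f.integrable_smul μ₁ v)]

lemma drift_bernoulliMix (t : unitInterval) :
    (drift (bernoulliMix μ₀ μ₁ t) : HolderFun α v₀ →L[ℂ] ℂ) =
      (1 - (t : ℂ)) • drift μ₀ + (t : ℂ) • drift μ₁ := by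
  ext f
  exact integral_smul_bernoulliMix μ₀ μ₁ t f v₀

lemma transferOp_bernoulliMix [d.AtLeastTwo] (t : unitInterval) :
    (transferOp (bernoulliMix μ₀ μ₁ t) : HolderFun α v₀ →L[ℂ] _) =
      (1 - (t : ℂ)) • transferOp μ₀ + (t : ℂ) • transferOp μ₁ := by
  ext f v
  simp only [transferOp_apply, integral_smul_bernoulliMix, add_apply, smul_apply,
    GaugeLip.add_apply, GaugeLip.smul_apply]
  ring

lemma growth_bernoulliMix (t : unitInterval) :
    growth (bernoulliMix μ₀ μ₁ t) α v₀ =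
      (1 - (t : ℂ)) • growth μ₀ α v₀ + (t : ℂ) • growth μ₁ α v₀ := by
  ext v
  simp only [growth_apply, meanCocycle_one_bernoulliMix, GaugeLip.add_apply, GaugeLip.smul_apply]
  push_cast
  ring

end HolderFun

theorem exists_analyticAt_L1_bernoulliMix [d.AtLeastTwo] (hqi : QuasiIrreducible μ₀)
    (hgap : L2 μ₀ < L1 μ₀) :
    ∃ Λ : ℂ → ℂ, AnalyticAt ℂ Λ 0 ∧
      ∃ r > 0, ∀ t : unitInterval, (t : ℝ) < r → L1 (bernoulliMix μ₀ μ₁ t) = (Λ (t : ℝ)).re := by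
  obtain ⟨v₀⟩ : Nonempty (UnitSphere d) := inferInstance
  obtain ⟨α, m, hm, hpow⟩ := HolderFun.exists_norm_transferOp_pow_lt_one μ₀ hqi hgap v₀
  let T (t : ℂ) : HolderFun α v₀ →L[ℂ] HolderFun α v₀ :=
    (1 - t) • HolderFun.transferOp μ₀ + t • HolderFun.transferOp μ₁
  let D (t : ℂ) : HolderFun α v₀ →L[ℂ] ℂ :=
    (1 - t) • HolderFun.drift μ₀ + t • HolderFun.drift μ₁
  let φ (t : ℂ) : HolderFun α v₀ :=
    (1 - t) • HolderFun.growth μ₀ α v₀ + t • HolderFun.growth μ₁ α v₀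
  obtain ⟨r, hr, θ, hθ₀, hθ₁, B, hdiff, hB⟩ := exists_differentiableOn_tsum_pow (T := T) (D := D)
    (φ := φ) (by fun_prop) (by fun_prop) (by fun_prop) hm (by simpa [T] using hpow)
  refine ⟨fun t => ((1 - t) * meanCocycle μ₀ 1 v₀ + t * meanCocycle μ₁ 1 v₀) +
      ∑' k, D t ((T t ^ k) (φ t)),
    .add (by fun_prop) (hdiff.analyticAt (Metric.ball_mem_nhds 0 hr)), r, hr, fun t ht => ?_⟩
  have htr : (t : ℂ) ∈ Metric.ball 0 r := by simpa [abs_of_nonneg t.2.1] using ht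
  have hL := HolderFun.L1_eq_add_re_tsum_drift (bernoulliMix μ₀ μ₁ t) (α := α) (v₀ := v₀) hθ₀ hθ₁
    (by
      rw [HolderFun.transferOp_bernoulliMix, HolderFun.drift_bernoulliMix,
        HolderFun.growth_bernoulliMix]
      exact hB t htr)
  rw [hL, HolderFun.transferOp_bernoulliMix, HolderFun.drift_bernoulliMix,
    HolderFun.growth_bernoulliMix, meanCocycle_one_bernoulliMix]
  simp [T, D, φ]

end Mixtures

theorem analyticity_bernoulli_quasi_irreducible
    (d : ℕ) (hd : 2 ≤ d) (S : Set (GLd d)) (hS : IsCompact S)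
    (μ₀ μ₁ : Measure (GLd d)) [IsProbabilityMeasure μ₀] [IsProbabilityMeasure μ₁]
    (hμ₀S : μ₀ Sᶜ = 0) (hμ₁S : μ₁ Sᶜ = 0)
    (hqi : QuasiIrreducible μ₀) (hgap : L2 μ₀ < L1 μ₀) :
    ∃ ε : ℝ, 0 < ε ∧ ε ≤ 1 ∧ ∃ a : ℕ → ℝ,
      (Summable fun k : ℕ => |a k| * ε ^ k) ∧
      ∀ t : ℝ, 0 ≤ t → t < ε →
        L1 (Real.toNNReal (1 - t) • μ₀ + Real.toNNReal t • μ₁ : Measure (GLd d)) = ∑' k : ℕ, a k * t ^ k := by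
  have : d.AtLeastTwo := ⟨hd⟩
  have : IsCompactProbability μ₀ := ⟨S, hS, hμ₀S⟩
  have : IsCompactProbability μ₁ := ⟨S, hS, hμ₁S⟩
  obtain ⟨Λ, hΛ, r, hr, hL1⟩ := exists_analyticAt_L1_bernoulliMix μ₀ μ₁ hqi hgap
  obtain ⟨a, ha⟩ := exists_hasSum_re_of_analyticAt hΛ
  obtain ⟨ε, ⟨hsum, hseries⟩, hε₀, hε⟩ :=
    (ha.and (Ioc_mem_nhdsGT (lt_min hr one_pos))).exists
  refine ⟨ε, hε₀, hε.trans (min_le_right _ _), a, hsum, fun t ht₀ ht => ?_⟩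
  have htr : t < min r 1 := ht.trans_le hε
  exact (hL1 ⟨t, ht₀, (htr.trans_le (min_le_right _ _)).le⟩ (htr.trans_le (min_le_left _ _))).trans
    (hseries t (by rwa [abs_of_nonneg ht₀])).tsum_eq.symm

end
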